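/- arXiv:1706.06470 — 3 statements merged into one kernel-verified Lean document; each statement's English description precedes it below -/
import Mathlib

section
/- Let (a_n) be a sequence in a field K of characteristic zero satisfying a linear recurrence a_n = Σ_{j=1}^d γ_j a_{n-j} for n ≥ d with constant coefficients γ_j ∈ K. Then the zero set { n ∈ ℕ | a_n = 0 } is the union of a finite set and finitely many arithmetic progressions. -/
/-- A set of naturals is SML if it is the union of a finite set and finitely
many one-sided arithmetic progressions `{α + t β | t ∈ ℕ}`. -/
def IsSML (N : Set ℕ) : Prop :=
  ∃ (F : Finset ℕ) (k : ℕ) (α β : Fin k → ℕ),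
    N = (↑F : Set ℕ) ∪ ⋃ i : Fin k, {m : ℕ | ∃ t : ℕ, m = α i + t * β i}

/-! The sequences `n ↦ f (T ^ n v)`, with `T` an endomorphism of a finite-dimensional space and `f`
a linear form, include all solutions of linear recurrences: take for `T` the shift on the solution
space. By Fitting's lemma `T` may be assumed invertible, after dropping finitely many terms. The
matrix entries of `T` and `T⁻¹` and the coordinates of `f` and `v` then lie in a finitely generated
domain of characteristic zero. It embeds into a finite free `ℤ_[p]`-algebra for some prime `p`:
send a transcendence basis to algebraically independent `p`-adic integers at which the denominators
of the remaining generators are units.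

Over such an algebra the image `A` of `T` has finite order modulo `p ^ 3`, say
`A ^ N = 1 + p ^ 3 B`. Expanding `A ^ (r + t N)` binomially shows that the terms of index `r + t N`
are the values at `t` of a `p`-adic analytic function. As its zeros are locally isolated unless it
vanishes locally, compactness of `ℤ_[p]` splits the `t` into finitely many residue classes modulo a
power of `p`, on each of which the function vanishes identically or at most once.
-/

open Metric Polynomial Topology
open scoped Matrix NNReal Pointwise

namespace IsSML

theorem of_finite {N : Set ℕ} (h : N.Finite) : IsSML N :=
  ⟨h.toFinset, 0, Fin.elim0, Fin.elim0, by simp⟩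

theorem univ : IsSML Set.univ :=
  ⟨∅, 1, fun _ ↦ 0, fun _ ↦ 1, by ext; simp⟩

theorem union {M N : Set ℕ} (hM : IsSML M) (hN : IsSML N) : IsSML (M ∪ N) := by
  obtain ⟨F, k, α, β, rfl⟩ := hM
  obtain ⟨F', k', α', β', rfl⟩ := hN
  refine ⟨F ∪ F', k + k', Fin.append α α', Fin.append β β', ?_⟩
  have progressions : (⋃ i, {m | ∃ t, m = Fin.append α α' i + t * Fin.append β β' i}) =
      (⋃ i, {m | ∃ t, m = α i + t * β i}) ∪ ⋃ i, {m | ∃ t, m = α' i + t * β' i} := by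
    ext m
    simp [finSumFinEquiv.symm.exists_congr_left]
  rw [progressions, Finset.coe_union, Set.union_union_union_comm]

theorem image_add_mul {M : Set ℕ} (hM : IsSML M) (r N : ℕ) :
    IsSML ((fun t ↦ r + t * N) '' M) := by
  obtain ⟨F, k, α, β, rfl⟩ := hM
  refine ⟨F.image fun t ↦ r + t * N, k, fun i ↦ r + α i * N, fun i ↦ β i * N, ?_⟩
  rw [Set.image_union, Set.image_iUnion, Finset.coe_image]
  congr! with i
  ext m
  simp only [Set.mem_image, Set.mem_ofPred_eq]
  constructor
  · rintro ⟨_, ⟨t, rfl⟩, rfl⟩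
    exact ⟨t, by ring⟩
  · rintro ⟨t, rfl⟩
    exact ⟨_, ⟨t, rfl⟩, by ring⟩

theorem biUnion {ι : Type*} (s : Finset ι) {Z : ι → Set ℕ} (h : ∀ i ∈ s, IsSML (Z i)) :
    IsSML (⋃ i ∈ s, Z i) := by
  classical
  induction s using Finset.induction_on with
  | empty => simpa using of_finite Set.finite_empty
  | insert i s _ ih =>
    rw [Finset.set_biUnion_insert]
    exact (h i (by simp)).union (ih fun j hj ↦ h j (by simp [hj]))

theorem of_residues {Z : Set ℕ} {N : ℕ} (hN : 0 < N)
    (h : ∀ r, IsSML {t | r + t * N ∈ Z}) : IsSML Z := by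
  have decomposition :
      Z = ⋃ r ∈ Finset.range N, (fun t ↦ r + t * N) '' {t | r + t * N ∈ Z} := by
    ext n
    simp only [Set.mem_iUnion, Set.mem_image, Set.mem_ofPred_eq, Finset.mem_range]
    constructor
    · intro hn
      have hdiv : n % N + n / N * N = n := Nat.mod_add_div' n N
      exact ⟨n % N, Nat.mod_lt _ hN, n / N, by rwa [hdiv], hdiv⟩
    · rintro ⟨r, -, t, ht, rfl⟩
      exact ht
  rw [decomposition]
  exact biUnion _ fun r _ ↦ (h r).image_add_mul r N

theorem of_shift {Z : Set ℕ} (k : ℕ) (h : IsSML {n | n + k ∈ Z}) : IsSML Z := by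
  have decomposition : Z = (Z ∩ Set.Iio k) ∪ (fun n ↦ k + n * 1) '' {n | n + k ∈ Z} := by
    ext n
    simp only [Set.mem_union, Set.mem_inter_iff, Set.mem_Iio, Set.mem_image, Set.mem_ofPred_eq]
    constructor
    · intro hn
      rcases lt_or_ge n k with hnk | hkn
      · exact Or.inl ⟨hn, hnk⟩
      · exact Or.inr ⟨n - k, by rwa [Nat.sub_add_cancel hkn], by omega⟩
    · rintro (⟨hn, -⟩ | ⟨m, hm, rfl⟩)
      · exact hn
      · rwa [mul_one, add_comm]
  rw [decomposition]
  exact (of_finite ((Set.finite_Iio k).inter_of_right Z)).union (h.image_add_mul k 1)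

end IsSML

section PowerSeries

variable {𝕜 E : Type*} [NontriviallyNormedField 𝕜] [NormedAddCommGroup E] [NormedSpace 𝕜 E]
  [CompleteSpace E] {r : ℝ≥0}

theorem analyticOnNhd_tsum_pow_smul {a : ℕ → E} {C : ℝ} (ha : ∀ j, ‖a j‖ * r ^ j ≤ C) :
    AnalyticOnNhd 𝕜 (fun z : 𝕜 ↦ ∑' j, z ^ j • a j) (ball 0 r) := by
  let P : FormalMultilinearSeries 𝕜 𝕜 E := fun j ↦
    ContinuousMultilinearMap.mkPiRing 𝕜 (Fin j) (a j)
  have sum_eq : P.sum = fun z ↦ ∑' j, z ^ j • a j := by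
    ext z
    simp [FormalMultilinearSeries.sum, P]
  have le_radius : (r : ENNReal) ≤ P.radius := P.le_radius_of_bound C fun j ↦ by
    simpa only [P, ContinuousMultilinearMap.norm_mkPiRing] using ha j
  intro z hz
  rw [mem_ball_zero_iff] at hz
  have z_lt_radius : (‖z‖₊ : ENNReal) < P.radius := lt_of_lt_of_le (mod_cast hz) le_radius
  rw [← sum_eq]
  refine (P.hasFPowerSeriesOnBall (bot_le.trans_lt z_lt_radius)).analyticAt_of_mem ?_
  rwa [mem_eball, edist_zero_right, enorm_eq_nnnorm]

theorem analyticOnNhd_tsum_tsum_pow_smul {c : ℕ → ℕ → E} {M : ℕ → ℝ} (hM : Summable M)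
    (hc : ∀ k j, ‖c k j‖ * r ^ j ≤ M k) :
    AnalyticOnNhd 𝕜 (fun z : 𝕜 ↦ ∑' k, ∑' j, z ^ j • c k j) (ball 0 r) := by
  obtain rfl | hr := eq_zero_or_pos r
  · simp [AnalyticOnNhd]
  have hr' : (0 : ℝ) < r := hr
  have coeff_bound (j : ℕ) : ‖∑' k, c k j‖ * r ^ j ≤ ∑' k, M k := by
    rw [← le_div_iff₀ (by positivity), ← tsum_div_const]
    exact tsum_of_norm_bounded (hM.div_const _).hasSum fun k ↦
      (le_div_iff₀ (by positivity)).2 (hc k j)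
  refine (analyticOnNhd_tsum_pow_smul coeff_bound).congr isOpen_ball fun z hz ↦ ?_
  rw [mem_ball_zero_iff] at hz
  have column_summable (j : ℕ) : Summable fun k ↦ c k j :=
    .of_norm_bounded (hM.div_const (r ^ j : ℝ)) fun k ↦
      (le_div_iff₀ (by positivity)).2 (hc k j)
  have summable : Summable (Function.uncurry fun k j ↦ z ^ j • c k j) := by
    have geometric : Summable fun j : ℕ ↦ (‖z‖ / r) ^ j :=
      summable_geometric_of_lt_one (by positivity) ((div_lt_one hr').2 hz)
    have M_nonneg (k : ℕ) : 0 ≤ M k := le_trans (by positivity) (hc k 0)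
    refine .of_norm_bounded (hM.mul_of_nonneg geometric M_nonneg fun j ↦ by positivity) ?_
    rintro ⟨k, j⟩
    calc ‖z ^ j • c k j‖ = ‖c k j‖ * r ^ j * (‖z‖ / r) ^ j := by
          rw [norm_smul, norm_pow, div_pow]
          field_simp
      _ ≤ M k * (‖z‖ / r) ^ j := by gcongr; exact hc k j
  calc ∑' j, z ^ j • ∑' k, c k j = ∑' j, ∑' k, z ^ j • c k j :=
        tsum_congr fun j ↦ ((column_summable j).tsum_const_smul _).symm
    _ = ∑' k, ∑' j, z ^ j • c k j := summable.tsum_comm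

theorem analyticOnNhd_tsum_eval_smul {P : ℕ → 𝕜[X]} {b : ℕ → E} {M : ℕ → ℝ} (hM : Summable M)
    (hP : ∀ k j, ‖(P k).coeff j‖ * ‖b k‖ * r ^ j ≤ M k) :
    AnalyticOnNhd 𝕜 (fun z ↦ ∑' k, (P k).eval z • b k) (ball 0 r) := by
  have eval_smul (z : 𝕜) (k : ℕ) :
      (P k).eval z • b k = ∑' j, z ^ j • (P k).coeff j • b k := by
    rw [tsum_eq_sum (s := (P k).support) fun j hj ↦ by simp [notMem_support_iff.1 hj],
      eval_eq_sum, Polynomial.sum, Finset.sum_smul]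
    simp only [mul_comm ((P k).coeff _), mul_smul]
  simp only [eval_smul]
  exact analyticOnNhd_tsum_tsum_pow_smul hM fun k j ↦ by simpa only [norm_smul] using hP k j

end PowerSeries

theorem exists_pow_eq_one_add_smul {R M : Type*} [CommRing R] [Ring M] [Algebra R M] {c : R}
    [Finite (M ⧸ c • (⊤ : Submodule R M))] {x : M} (hx : IsUnit x) :
    ∃ N > 0, ∃ y, x ^ N = 1 + c • y := by
  obtain ⟨u, rfl⟩ := hx
  obtain ⟨i, j, hij, heq⟩ := Finite.exists_ne_map_eq_of_infinite fun n : ℕ ↦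
    Submodule.Quotient.mk (p := c • (⊤ : Submodule R M)) ((u : M) ^ n)
  wlog hlt : i < j generalizing i j
  · exact this j i hij.symm heq.symm (by omega)
  obtain ⟨z, -, hz⟩ := (Submodule.mem_smul_pointwise_iff_exists ..).1
    ((Submodule.Quotient.eq _).1 heq.symm)
  refine ⟨j - i, by omega, ↑(u ^ i)⁻¹ * z, ?_⟩
  calc (u : M) ^ (j - i) = ↑(u ^ i)⁻¹ * (u : M) ^ j := by
        exact_mod_cast eq_inv_mul_iff_mul_eq.2 (pow_mul_pow_sub u hlt.le)
    _ = ↑(u ^ i)⁻¹ * ((u : M) ^ i + c • z) := by rw [hz, add_sub_cancel]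
    _ = 1 + c • (↑(u ^ i)⁻¹ * z) := by
        rw [mul_add, ← Units.val_pow_eq_pow_val, Units.inv_mul, mul_smul_comm]

section Padic

variable {p : ℕ} [Fact p.Prime]

theorem inv_pow_le_norm_factorial (k : ℕ) : (p : ℝ)⁻¹ ^ k ≤ ‖(k.factorial : ℚ_[p])‖ := by
  have valuation_le : padicValNat p k.factorial ≤ k := by
    have two_le : 2 ≤ p := (Fact.out : p.Prime).two_le
    calc padicValNat p k.factorial ≤ (p - 1) * padicValNat p k.factorial :=
          Nat.le_mul_of_pos_left _ (by omega)
      _ ≤ k := by rw [sub_one_mul_padicValNat_factorial]; omega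
  rw [Padic.norm_eq_zpow_neg_valuation (mod_cast k.factorial_ne_zero),
    Padic.valuation_natCast, zpow_neg, zpow_natCast, ← inv_pow]
  have one_le : (1 : ℝ) ≤ p := mod_cast (Fact.out : p.Prime).one_le
  exact pow_le_pow_of_le_one (by positivity) (inv_le_one_of_one_le₀ one_le) valuation_le

theorem norm_coeff_descPochhammer_le_one (k j : ℕ) :
    ‖(descPochhammer ℚ_[p] k).coeff j‖ ≤ 1 := by
  rw [← descPochhammer_map (Int.castRingHom ℚ_[p]), coeff_map]
  exact Padic.norm_int_le_one _

/- One factor `p ^ k` absorbs the denominator `k!`, one enlarges the disc of convergence to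
radius `p > 1`, and the last one makes the series converge. -/
theorem exists_analyticOnNhd_eq_sum_choose {V : Type*} [NormedAddCommGroup V]
    [NormedSpace ℚ_[p] V] [CompleteSpace V] {b : ℕ → V} (hb : ∀ k, ‖b k‖ ≤ 1) :
    ∃ g : ℚ_[p] → V, AnalyticOnNhd ℚ_[p] g (closedBall 0 1) ∧
      ∀ n : ℕ, g n = ∑ k ∈ Finset.range (n + 1), (n.choose k * (p : ℚ_[p]) ^ (3 * k)) • b k := by
  have one_lt : (1 : ℝ) < p := mod_cast (Fact.out : p.Prime).one_lt
  let P (k : ℕ) : ℚ_[p][X] :=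
    C ((p : ℚ_[p]) ^ (3 * k) / k.factorial) * descPochhammer ℚ_[p] k
  have eval_P (k n : ℕ) : (P k).eval (n : ℚ_[p]) = n.choose k * (p : ℚ_[p]) ^ (3 * k) := by
    have factorial_ne_zero : (k.factorial : ℚ_[p]) ≠ 0 := mod_cast k.factorial_ne_zero
    rw [eval_C_mul, descPochhammer_eval_eq_descFactorial, Nat.descFactorial_eq_factorial_mul_choose]
    push_cast
    field_simp
  have coeff_P (k j : ℕ) : ‖(P k).coeff j‖ * ‖b k‖ * (p : ℝ≥0) ^ j ≤ (p : ℝ)⁻¹ ^ k := by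
    obtain hkj | hjk := lt_or_ge k j
    · rw [coeff_C_mul, coeff_eq_zero_of_natDegree_lt (by rwa [descPochhammer_natDegree])]
      simp
    calc ‖(P k).coeff j‖ * ‖b k‖ * (p : ℝ≥0) ^ j
      _ ≤ (p : ℝ)⁻¹ ^ (3 * k) / (p : ℝ)⁻¹ ^ k * 1 * 1 * (p : ℝ) ^ k := by
        rw [coeff_C_mul, norm_mul, norm_div, norm_pow, Padic.norm_p, NNReal.coe_natCast]
        gcongr
        · exact inv_pow_le_norm_factorial k
        · exact norm_coeff_descPochhammer_le_one k j
        · exact hb k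
        · exact one_lt.le
      _ = (p : ℝ)⁻¹ ^ k := by
        simp only [inv_pow, pow_mul']
        field_simp
  have summable : Summable fun k : ℕ ↦ (p : ℝ)⁻¹ ^ k :=
    summable_geometric_of_lt_one (by positivity) (inv_lt_one_of_one_lt₀ one_lt)
  refine ⟨fun z ↦ ∑' k, (P k).eval z • b k,
    (analyticOnNhd_tsum_eval_smul summable coeff_P).mono (closedBall_subset_ball one_lt),
    fun n ↦ ?_⟩
  simp only [eval_P]
  refine tsum_eq_sum fun k hk ↦ ?_
  rw [Nat.choose_eq_zero_of_lt (by simpa using hk)]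
  simp

theorem exists_pow_forall_dvd_mem {U : ℤ_[p] → Set ℤ_[p]} (hU : ∀ c, U c ∈ 𝓝 c) :
    ∃ m : ℕ, ∀ x, ∃ c, ∀ y, (p : ℤ_[p]) ^ m ∣ y - x → y ∈ U c := by
  obtain ⟨V, hV, hVU⟩ := lebesgue_number_lemma_nhds isCompact_univ fun c _ ↦ hU c
  obtain ⟨δ, hδ, hδV⟩ := mem_uniformity_dist.1 hV
  obtain ⟨m, hm⟩ := PadicInt.exists_pow_neg_lt p hδ
  refine ⟨m, fun x ↦ ?_⟩
  obtain ⟨c, hc⟩ := hVU x trivial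
  refine ⟨c, fun y hxy ↦ hc (hδV ?_)⟩
  rw [dist_comm, dist_eq_norm]
  refine lt_of_le_of_lt ?_ hm
  rwa [PadicInt.norm_le_pow_iff_mem_span_pow, Ideal.mem_span_singleton]

theorem isSML_setOf_eq_zero_of_analyticOnNhd {V : Type*} [NormedAddCommGroup V]
    [NormedSpace ℚ_[p] V] {g : ℚ_[p] → V} (hg : AnalyticOnNhd ℚ_[p] g (closedBall 0 1)) :
    IsSML {n : ℕ | g n = 0} := by
  let G (x : ℤ_[p]) : V := g x
  have locally_zero_or_isolated (c : ℤ_[p]) :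
      ∃ U ∈ 𝓝 c, (∀ y ∈ U, G y = 0) ∨ ∀ y ∈ U, G y = 0 → y = c := by
    have tendsto : Filter.Tendsto ((↑) : ℤ_[p] → ℚ_[p]) (𝓝 c) (𝓝 c) :=
      continuous_subtype_val.continuousAt
    have analyticAt : AnalyticAt ℚ_[p] g c := hg c (mem_closedBall_zero_iff.2 c.2)
    rcases analyticAt.eventually_eq_zero_or_eventually_ne_zero with h | h
    · exact ⟨_, tendsto.eventually h, Or.inl fun y hy ↦ hy⟩
    · refine ⟨_, tendsto.eventually (eventually_nhdsWithin_iff.1 h), Or.inr fun y hy hGy ↦ ?_⟩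
      by_contra hne
      exact hy (fun heq ↦ hne (Subtype.ext heq)) hGy
  choose U hU hUc using locally_zero_or_isolated
  obtain ⟨m, hm⟩ := exists_pow_forall_dvd_mem hU
  have pow_pos : 0 < p ^ m := Nat.pow_pos (Fact.out : p.Prime).pos
  refine IsSML.of_residues pow_pos fun r ↦ ?_
  obtain ⟨c, hc⟩ := hm r
  have mem_U (t : ℕ) : ((r + t * p ^ m : ℕ) : ℤ_[p]) ∈ U c :=
    hc _ ⟨t, by push_cast; ring⟩
  have zero_iff (n : ℕ) : n ∈ {n : ℕ | g n = 0} ↔ G n = 0 := by simp [G]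
  simp only [zero_iff]
  rcases hUc c with hzero | hisolated
  · convert IsSML.univ
    exact Set.eq_univ_of_forall fun t ↦ hzero _ (mem_U t)
  · refine IsSML.of_finite (Set.Subsingleton.finite fun s hs t ht ↦ ?_)
    have heq : r + s * p ^ m = r + t * p ^ m :=
      mod_cast (hisolated _ (mem_U s) hs).trans (hisolated _ (mem_U t) ht).symm
    exact Nat.eq_of_mul_eq_mul_right pow_pos (Nat.add_left_cancel heq)

theorem isSML_setOf_sum_choose_smul_eq_zero {W : Type*} [AddCommGroup W] [Module ℤ_[p] W]
    [Module.Finite ℤ_[p] W] [Module.Free ℤ_[p] W] (w : ℕ → W) :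
    IsSML {n | ∑ k ∈ Finset.range (n + 1), (n.choose k * (p : ℤ_[p]) ^ (3 * k)) • w k = 0} := by
  let B := Module.Free.chooseBasis ℤ_[p] W
  let b (k : ℕ) : Module.Free.ChooseBasisIndex ℤ_[p] W → ℚ_[p] := fun i ↦ (B.repr (w k) i : ℤ_[p])
  have norm_b_le (k : ℕ) : ‖b k‖ ≤ 1 :=
    (pi_norm_le_iff_of_nonneg zero_le_one).2 fun i ↦ PadicInt.norm_le_one _
  obtain ⟨g, hg, hgn⟩ := exists_analyticOnNhd_eq_sum_choose (p := p) norm_b_le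
  convert isSML_setOf_eq_zero_of_analyticOnNhd hg with n
  rw [hgn, ← B.repr.map_eq_zero_iff, Finsupp.ext_iff, funext_iff]
  refine forall_congr' fun i ↦ ?_
  simp [← PadicInt.coe_eq_zero, b]

theorem finite_quotient_pow_smul_top {M : Type*} [AddCommGroup M] [Module ℤ_[p] M]
    [Module.Finite ℤ_[p] M] (m : ℕ) :
    Finite (M ⧸ (p : ℤ_[p]) ^ m • (⊤ : Submodule ℤ_[p] M)) := by
  have : Finite (ℤ_[p] ⧸ Ideal.span {(p : ℤ_[p]) ^ m}) := by
    rw [← PadicInt.ker_toZModPow]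
    have : NeZero (p ^ m) := ⟨pow_ne_zero m (Fact.out : p.Prime).ne_zero⟩
    exact Finite.of_injective _ (RingHom.kerLift_injective (PadicInt.toZModPow m))
  rw [← Submodule.ideal_span_singleton_smul]
  exact Submodule.finite_quotient_smul _ Module.Finite.fg_top

theorem isSML_setOf_map_pow_eq_zero {M W : Type*} [Ring M] [Algebra ℤ_[p] M]
    [Module.Finite ℤ_[p] M] [AddCommGroup W] [Module ℤ_[p] W] [Module.Finite ℤ_[p] W]
    [Module.Free ℤ_[p] W] (f : M →ₗ[ℤ_[p]] W) {x : M} (hx : IsUnit x) :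
    IsSML {n | f (x ^ n) = 0} := by
  have := finite_quotient_pow_smul_top (p := p) (M := M) 3
  obtain ⟨N, hN, y, hxN⟩ :=
    exists_pow_eq_one_add_smul (c := (p : ℤ_[p]) ^ 3) hx
  refine IsSML.of_residues hN fun r ↦ ?_
  convert isSML_setOf_sum_choose_smul_eq_zero (p := p) fun k ↦ f (x ^ r * y ^ k) with t
  have pow_eq : x ^ (r + t * N) =
      ∑ k ∈ Finset.range (t + 1), (t.choose k * (p : ℤ_[p]) ^ (3 * k)) • (x ^ r * y ^ k) := by
    rw [pow_add, mul_comm t, pow_mul, hxN, add_comm, (Commute.one_right _).add_pow, Finset.mul_sum]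
    refine Finset.sum_congr rfl fun k _ ↦ ?_
    rw [one_pow, mul_one, _root_.smul_pow, ← pow_mul, ← nsmul_eq_mul', mul_smul_comm, mul_smul_comm,
      mul_smul, Nat.cast_smul_eq_nsmul, smul_comm]
  rw [Set.mem_ofPred_eq, pow_eq, map_sum]
  simp only [map_smul]

end Padic

open Cardinal in
theorem exists_algebraicIndependent {R A ι : Type*} [CommRing R] [Countable R] [CommRing A]
    [IsDomain A] [Algebra R A] [FaithfulSMul R A] [Uncountable A] [Countable ι] :
    ∃ x : ι → A, AlgebraicIndependent R x := by
  have : Nontrivial R := (algebraMap R A).domain_nontrivial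
  obtain ⟨s, hs⟩ := exists_isTranscendenceBasis R A
  have : Infinite s := by
    by_contra hfin
    have : Finite s := not_infinite_iff_finite.1 hfin
    let B := Algebra.adjoin R (Set.range ((↑) : s → A))
    have : Algebra.IsAlgebraic B A := hs.isAlgebraic
    have mk_poly : #(MvPolynomial s R) ≤ ℵ₀ :=
      MvPolynomial.cardinalMk_le_max_lift.trans (by simp)
    have : Countable (MvPolynomial s R) := mk_le_aleph0_iff.1 mk_poly
    have : Countable B := Countable.of_equiv _ hs.1.aevalEquiv.toEquiv
    have h := Algebra.IsAlgebraic.cardinalMk_le_max B A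
    rw [max_eq_right mk_le_aleph0] at h
    exact not_countable (mk_le_aleph0_iff.1 h)
  obtain ⟨e, he⟩ := exists_injective_nat ι
  exact ⟨_, hs.1.comp (Infinite.natEmbedding s ∘ e) ((Infinite.natEmbedding s).injective.comp he)⟩

open Cardinal in
instance uncountable_padicInt (p : ℕ) [Fact p.Prime] : Uncountable ℤ_[p] := by
  rw [← aleph0_lt_mk_iff, ← IsFractionRing.cardinalMk ℤ_[p] ℚ_[p]]
  exact aleph0_lt_continuum.trans_le (continuum_le_cardinal_of_nontriviallyNormedField ℚ_[p])

theorem exists_algebraicIndependent_toZMod_eq (p : ℕ) [Fact p.Prime] {ι : Type*} [Countable ι]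
    (c : ι → ℤ) :
    ∃ t : ι → ℤ_[p], AlgebraicIndependent ℤ t ∧ ∀ i, PadicInt.toZMod (t i) = c i := by
  obtain ⟨x, hx⟩ : ∃ x : ι → ℤ_[p], AlgebraicIndependent ℤ x := exists_algebraicIndependent
  have p_ne_zero : (p : ℤ) ≠ 0 := mod_cast (Fact.out : p.Prime).ne_zero
  have transcendental (i : ι) : Transcendental ℤ (C (p : ℤ) * X + C (c i)) :=
    Polynomial.transcendental _ (by rw [natDegree_linear p_ne_zero]; exact one_ne_zero)
      (by rw [leadingCoeff_linear p_ne_zero]; exact mem_nonZeroDivisors_of_ne_zero p_ne_zero)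
  exact ⟨_, hx.polynomial_aeval_of_transcendental transcendental, fun i ↦ by simp⟩

theorem exists_algebraicIndependent_isUnit_aeval {ι : Type*} [Finite ι] {Q : MvPolynomial ι ℤ}
    (hQ : Q ≠ 0) :
    ∃ (p : ℕ) (_ : Fact p.Prime) (t : ι → ℤ_[p]),
      AlgebraicIndependent ℤ t ∧ IsUnit (MvPolynomial.aeval t Q) := by
  obtain ⟨c, hc⟩ : ∃ c : ι → ℤ, MvPolynomial.eval c Q ≠ 0 := by
    contrapose! hQ
    exact MvPolynomial.funext (by simpa using hQ)
  obtain ⟨p, p_gt, p_prime⟩ := Nat.exists_infinite_primes ((MvPolynomial.eval c Q).natAbs + 1)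
  have : Fact p.Prime := ⟨p_prime⟩
  obtain ⟨t, ht, toZMod_t⟩ := exists_algebraicIndependent_toZMod_eq p c
  refine ⟨p, this, t, ht, ?_⟩
  have toZMod_aeval :
      PadicInt.toZMod (MvPolynomial.aeval t Q) = (MvPolynomial.eval c Q : ZMod p) := by
    calc PadicInt.toZMod (MvPolynomial.aeval t Q)
        = MvPolynomial.aeval (fun i ↦ (c i : ZMod p)) Q := by
          simpa [toZMod_t] using MvPolynomial.comp_aeval_apply t PadicInt.toZMod.toIntAlgHom Q
      _ = MvPolynomial.eval c Q := by
          simpa using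
            (MvPolynomial.comp_aeval_apply c (Int.castRingHom (ZMod p)).toIntAlgHom Q).symm
  rw [← IsLocalRing.notMem_maximalIdeal, ← PadicInt.ker_toZMod, RingHom.mem_ker, toZMod_aeval,
    ZMod.intCast_zmod_eq_zero_iff_dvd, Int.natCast_dvd]
  exact Nat.not_dvd_of_pos_of_lt (Int.natAbs_pos.2 hc) p_gt

theorem exists_injective_ringHom_isIntegral {B R A L : Type*} [CommRing B] [CommRing R]
    [IsDomain R] [Algebra B R] [FaithfulSMul B R] [Algebra.IsAlgebraic B R] [CommRing A] [Field L]
    [IsAlgClosed L] [Algebra A L] [FaithfulSMul A L]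
    {ψ : B →+* A} (hψ : Function.Injective ψ) {D : B} (hD : IsUnit (ψ D)) {s : Set R}
    (hs : ∀ x ∈ s, IsIntegral B (D • x)) :
    ∃ φ : R →+* L, Function.Injective φ ∧ ∀ x ∈ s, IsIntegral A (φ x) := by
  have := (FaithfulSMul.algebraMap_injective B R).isDomain
  algebraize [(algebraMap A L).comp ψ]
  have : FaithfulSMul B L := (faithfulSMul_iff_algebraMap_injective B L).2
    ((FaithfulSMul.algebraMap_injective A L).comp hψ)
  let φ : R →ₐ[B] L := IsAlgClosed.lift
  refine ⟨φ, ?_, fun x hx ↦ ?_⟩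
  · algebraize [(φ : R →+* L)]
    have := IsScalarTower.of_algebraMap_eq' φ.comp_algebraMap.symm
    exact Algebra.IsAlgebraic.injective_tower_top (R := B) R (FaithfulSMul.algebraMap_injective B L)
  · have map_smul_isIntegral : IsIntegral A (φ (D • x)) :=
      (hs x hx).map_of_comp_eq ψ (φ : R →+* L) φ.comp_algebraMap.symm
    obtain ⟨u, hu⟩ := hD
    have eq_inv_smul : φ x = (↑u⁻¹ : A) • φ (D • x) := by
      rw [map_smul, Algebra.smul_def D, RingHom.algebraMap_toAlgebra, RingHom.comp_apply, ← hu,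
        ← Algebra.smul_def, smul_smul, Units.inv_mul, one_smul]
    exact eq_inv_smul ▸ map_smul_isIntegral.smul _

instance faithfulSMul_padicInt_algebraicClosure (p : ℕ) [Fact p.Prime] :
    FaithfulSMul ℤ_[p] (AlgebraicClosure ℚ_[p]) := by
  rw [faithfulSMul_iff_algebraMap_injective, IsScalarTower.algebraMap_eq ℤ_[p] ℚ_[p]]
  exact (algebraMap ℚ_[p] _).injective.comp (IsFractionRing.injective ℤ_[p] ℚ_[p])

theorem exists_injective_ringHom_isIntegral_padicInt {R : Type*} [CommRing R] [IsDomain R]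
    [CharZero R] (s : Finset R) [Algebra.IsAlgebraic (Algebra.adjoin ℤ (s : Set R)) R] :
    ∃ (p : ℕ) (_ : Fact p.Prime) (φ : R →+* AlgebraicClosure ℚ_[p]),
      Function.Injective φ ∧ ∀ x ∈ s, IsIntegral ℤ_[p] (φ x) := by
  obtain ⟨x, x_subset, hx⟩ := exists_isTranscendenceBasis_subset (R := ℤ) (s : Set R)
  have : Finite x := s.finite_toSet.subset x_subset
  have := hx.isAlgebraic
  let B := Algebra.adjoin ℤ (Set.range ((↑) : x → R))
  obtain ⟨D, D_ne_zero, isIntegral_smul⟩ := Algebra.IsAlgebraic.exists_integral_multiples B s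
  obtain ⟨p, hp, t, ht, isUnit_aeval⟩ := exists_algebraicIndependent_isUnit_aeval
    (Q := hx.1.aevalEquiv.symm D) (by simpa using D_ne_zero)
  let ψ : B →ₐ[ℤ] ℤ_[p] := (MvPolynomial.aeval t).comp hx.1.aevalEquiv.symm
  have ψ_injective : Function.Injective ψ :=
    (algebraicIndependent_iff_injective_aeval.1 ht).comp hx.1.aevalEquiv.symm.injective
  exact ⟨p, hp, exists_injective_ringHom_isIntegral (s := (s : Set R)) (ψ := (ψ : B →+* ℤ_[p]))
    ψ_injective isUnit_aeval isIntegral_smul⟩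

theorem exists_injective_ringHom_finite_free_padicInt (R : Type*) [CommRing R] [IsDomain R]
    [CharZero R] [Algebra.FiniteType ℤ R] :
    ∃ (p : ℕ) (_ : Fact p.Prime) (S : Subalgebra ℤ_[p] (AlgebraicClosure ℚ_[p])) (φ : R →+* S),
      Module.Finite ℤ_[p] S ∧ Module.Free ℤ_[p] S ∧ Function.Injective φ := by
  obtain ⟨s, hs⟩ := Algebra.FiniteType.out (R := ℤ) (A := R)
  have : Algebra.IsAlgebraic (Algebra.adjoin ℤ (s : Set R)) R := by
    rw [hs]
    exact ⟨fun y ↦ isAlgebraic_algebraMap (⟨y, Algebra.mem_top⟩ : (⊤ : Subalgebra ℤ R))⟩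
  obtain ⟨p, hp, φ, φ_injective, isIntegral_φ⟩ := exists_injective_ringHom_isIntegral_padicInt s
  let S := Algebra.adjoin ℤ_[p] (φ '' s)
  have top_le : (⊤ : Subalgebra ℤ R) ≤ (S.restrictScalars ℤ).comap φ.toIntAlgHom :=
    hs ▸ Algebra.adjoin_le fun x hx ↦ Algebra.subset_adjoin (Set.mem_image_of_mem φ hx)
  have S_finite : Module.Finite ℤ_[p] S := Algebra.finite_adjoin_of_finite_of_isIntegral
    (s.finite_toSet.image φ) (Set.forall_mem_image.2 isIntegral_φ)
  exact ⟨p, hp, S, φ.codRestrict S fun y ↦ top_le (Algebra.mem_top (x := y)), S_finite,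
    inferInstance, fun _ _ h ↦ φ_injective (congrArg Subtype.val h)⟩

theorem map_dotProduct_pow_mulVec {R S n : Type*} [CommRing R] [CommRing S] [Fintype n]
    [DecidableEq n] (φ : R →+* S) (A : Matrix n n R) (u v : n → R) (k : ℕ) :
    φ (u ⬝ᵥ (A ^ k) *ᵥ v) = (φ ∘ u) ⬝ᵥ (A.map φ ^ k) *ᵥ (φ ∘ v) := by
  rw [RingHom.map_dotProduct, ← φ.mapMatrix_apply, ← map_pow]
  congr 1
  ext i
  exact RingHom.map_mulVec φ (A ^ k) v i

theorem isSML_setOf_dotProduct_pow_mulVec_eq_zero_of_finiteType {R n : Type*} [CommRing R]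
    [IsDomain R] [CharZero R] [Algebra.FiniteType ℤ R] [Fintype n] [DecidableEq n]
    {A : Matrix n n R} (hA : IsUnit A) (u v : n → R) :
    IsSML {k | u ⬝ᵥ (A ^ k) *ᵥ v = 0} := by
  obtain ⟨p, _, S, φ, _, _, φ_injective⟩ := exists_injective_ringHom_finite_free_padicInt R
  let f : Matrix n n S →ₗ[ℤ_[p]] S :=
    { toFun X := (φ ∘ u) ⬝ᵥ X *ᵥ (φ ∘ v)
      map_add' X Y := by rw [Matrix.add_mulVec, dotProduct_add]
      map_smul' c X := by rw [Matrix.smul_mulVec, dotProduct_smul, RingHom.id_apply] }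
  convert isSML_setOf_map_pow_eq_zero f (hA.map φ.mapMatrix) with k
  rw [← map_eq_zero_iff φ φ_injective, map_dotProduct_pow_mulVec]
  rfl

theorem isSML_setOf_dotProduct_pow_mulVec_eq_zero {R n : Type*} [CommRing R]
    [IsDomain R] [CharZero R] [Fintype n] [DecidableEq n]
    {A : Matrix n n R} (hA : IsUnit A) (u v : n → R) :
    IsSML {k | u ⬝ᵥ (A ^ k) *ᵥ v = 0} := by
  obtain ⟨A', hAA', hA'A⟩ := isUnit_iff_exists.1 hA
  let entries : Set R :=
    Set.range (Function.uncurry A) ∪ Set.range (Function.uncurry A') ∪ Set.range u ∪ Set.range v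
  have entries_finite : entries.Finite := by
    simp only [entries, Set.finite_union, Set.finite_range, and_self]
  let R₀ := Algebra.adjoin ℤ entries
  have : Algebra.FiniteType ℤ R₀ :=
    R₀.fg_iff_finiteType.1 (Subalgebra.fg_def.2 ⟨entries, entries_finite, rfl⟩)
  have mem {x : R} (hx : x ∈ entries) : x ∈ R₀ := Algebra.subset_adjoin hx
  let A₀ : Matrix n n R₀ := fun i j ↦ ⟨A i j, mem (.inl (.inl (.inl ⟨(i, j), rfl⟩)))⟩
  let A₀' : Matrix n n R₀ := fun i j ↦ ⟨A' i j, mem (.inl (.inl (.inr ⟨(i, j), rfl⟩)))⟩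
  let u₀ : n → R₀ := fun i ↦ ⟨u i, mem (.inl (.inr ⟨i, rfl⟩))⟩
  let v₀ : n → R₀ := fun i ↦ ⟨v i, mem (.inr ⟨i, rfl⟩)⟩
  let ι : R₀ →+* R := R₀.val
  have ι_injective : Function.Injective ι := Subtype.val_injective
  have mapMatrix_injective : Function.Injective (ι.mapMatrix : Matrix n n R₀ →+* Matrix n n R) :=
    Matrix.map_injective ι_injective
  have A₀_isUnit : IsUnit A₀ := isUnit_iff_exists.2
    ⟨A₀', mapMatrix_injective (by rw [map_mul, map_one]; exact hAA'),
      mapMatrix_injective (by rw [map_mul, map_one]; exact hA'A)⟩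
  convert isSML_setOf_dotProduct_pow_mulVec_eq_zero_of_finiteType A₀_isUnit u₀ v₀ with k
  rw [← map_eq_zero_iff ι ι_injective, map_dotProduct_pow_mulVec]
  rfl

theorem isSML_setOf_map_pow_apply_eq_zero_of_isUnit {K V : Type*} [Field K] [CharZero K]
    [AddCommGroup V] [Module K V] [FiniteDimensional K V] {T : Module.End K V} (hT : IsUnit T)
    (f : V →ₗ[K] K) (v : V) : IsSML {n | f ((T ^ n) v) = 0} := by
  classical
  let b := Module.finBasis K V
  convert isSML_setOf_dotProduct_pow_mulVec_eq_zero (hT.map (LinearMap.toMatrixAlgEquiv b))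
    (f ∘ b) (b.repr v) with n
  calc f ((T ^ n) v) = f (∑ i, b.repr ((T ^ n) v) i • b i) := by rw [b.sum_repr]
    _ = (f ∘ b) ⬝ᵥ b.repr ((T ^ n) v) := by
        simp only [map_sum, map_smul, dotProduct, smul_eq_mul, Function.comp_apply, mul_comm]
    _ = (f ∘ b) ⬝ᵥ (LinearMap.toMatrixAlgEquiv b T ^ n) *ᵥ b.repr v := by
        rw [← LinearMap.toMatrix_mulVec_repr b b, ← map_pow]
        rfl

theorem isSML_setOf_map_pow_apply_eq_zero {K V : Type*} [Field K] [CharZero K]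
    [AddCommGroup V] [Module K V] [FiniteDimensional K V] (T : Module.End K V)
    (f : V →ₗ[K] K) (v : V) : IsSML {n | f ((T ^ n) v) = 0} := by
  obtain ⟨k, disjoint, one_le⟩ :=
    (T.eventually_disjoint_ker_pow_range_pow.and (Filter.eventually_ge_atTop 1)).exists
  have T_mapsTo : ∀ x ∈ LinearMap.range (T ^ k), T x ∈ LinearMap.range (T ^ k) := by
    rintro _ ⟨y, rfl⟩
    exact ⟨T y, by rw [← Module.End.mul_apply, ← Module.End.mul_apply, (Commute.pow_self T k).eq]⟩
  have ker_restrict : LinearMap.ker (T.restrict T_mapsTo) = ⊥ := by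
    refine LinearMap.ker_eq_bot'.2 fun x hx ↦ Subtype.ext ?_
    have T_x : T x = 0 := congrArg Subtype.val hx
    exact Submodule.disjoint_def.1 disjoint x
      (Module.End.pow_map_zero_of_le one_le (by rwa [pow_one])) x.2
  refine IsSML.of_shift k ?_
  convert isSML_setOf_map_pow_apply_eq_zero_of_isUnit
    ((LinearMap.isUnit_iff_ker_eq_bot _).2 ker_restrict)
    (f ∘ₗ (LinearMap.range (T ^ k)).subtype) ⟨(T ^ k) v, v, rfl⟩ with n
  rw [Module.End.pow_restrict n, LinearMap.comp_apply, Submodule.subtype_apply,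
    LinearMap.coe_restrict_apply, ← Module.End.mul_apply, ← pow_add]
  rfl

theorem isSML_setOf_isSolution_eq_zero {K : Type*} [Field K] [CharZero K]
    {E : LinearRecurrence K} {u : ℕ → K} (hu : E.IsSolution u) : IsSML {n | u n = 0} := by
  have := Module.Finite.of_basis E.basis
  have shift_mapsTo : ∀ w ∈ E.solSpace, LinearMap.funLeft K K Nat.succ w ∈ E.solSpace := by
    intro w hw n
    simpa only [LinearMap.funLeft_apply, Nat.succ_add] using hw (n + 1)
  let shift : Module.End K E.solSpace := (LinearMap.funLeft K K Nat.succ).restrict shift_mapsTo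
  have shift_pow (n k : ℕ) (w : E.solSpace) : ((shift ^ n) w : ℕ → K) k = w.1 (k + n) := by
    induction n generalizing k with
    | zero => rfl
    | succ n ih =>
      rw [pow_succ', Module.End.mul_apply]
      exact (ih (k + 1)).trans (by rw [add_right_comm, add_assoc])
  convert isSML_setOf_map_pow_apply_eq_zero shift (LinearMap.proj 0 ∘ₗ E.solSpace.subtype) ⟨u, hu⟩
    with n
  simp [shift_pow]

/-- Skolem–Mahler–Lech theorem. -/
theorem skolem_mahler_lech {K : Type*} [Field K] [CharZero K]
    (d : ℕ) (hd : 1 ≤ d) (γ : Fin d → K) (a : ℕ → K)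
    (hrec : ∀ n : ℕ, a (n + d) = ∑ j : Fin d, γ j * a (n + d - 1 - j)) :
    IsSML {n : ℕ | a n = 0} := by
  let E : LinearRecurrence K := ⟨d, γ ∘ Fin.rev⟩
  have ha : E.IsSolution a := fun n ↦ by
    calc a (n + d) = ∑ j : Fin d, γ j * a (n + d - 1 - j) := hrec n
      _ = ∑ i : Fin d, γ i.rev * a (n + i) := by
        refine Fintype.sum_equiv Fin.revPerm _ _ fun j ↦ ?_
        rw [Fin.revPerm_apply, Fin.rev_rev, Fin.val_rev]
        congr 2
        omega
  exact isSML_setOf_isSolution_eq_zero ha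
end

section
/- Let K be a field of characteristic zero, V a finite-dimensional K-vector space, σ a linear automorphism of V, L a one-dimensional subspace and R a codimension-one subspace of V. Then the set { n ∈ ℕ | σⁿ(L) ⊆ R } is the union of a finite set and finitely many arithmetic progressions. -/
/-!
The condition `σⁿ L ⊆ R` is a matrix equation `U Mⁿ W = 0` with `M` invertible, and the entries of
`U`, `M`, `M⁻¹`, `W` lie in a finitely generated ring `A`. By Zariski's lemma over `ℚ`, some
quotient domain of `A` of characteristic zero is algebraic over `ℤ`. Pulling back the ideal `(p)`
from it, for a suitable prime number `p`, gives an ideal `I` of `A` with `A / I` finite, `p ∈ I`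
and `pⁿ ∉ Iⁿ⁺¹` for all `n`. Hence `p` is not a unit in the affine blowup algebra `A[I/p]`, and
localizing at a maximal ideal containing `p` yields a noetherian local domain `S ⊇ A` in which the
non-unit `p` divides every element of `I`.

Since `A / I²` is finite, `Mᴺ = 1 + p²E` over `S` for some `N > 0`. Expanding binomially and using
`k! ∣ pᵏ`, every entry of `U (Mᴺ)ⁿ W` agrees, for `n` in any bounded range, with `G (p n)` for a
polynomial `G` over `S`. If `j` of these values vanish, at `n = t₁, …, tⱼ`, then `∏ (X - p tᵢ)`
divides `G` and so `pʲ` divides every value. By Krull's intersection theorem, infinitely many zeros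
force all values to vanish. The same applies on each residue class modulo `N`.
-/

open scoped TensorProduct Nat

theorem isSML_of_forall_residue_class {Z : Set ℕ} {N : ℕ} (hN : 0 < N)
    (h : ∀ r < N, {n | r + N * n ∈ Z}.Infinite → ∀ n, r + N * n ∈ Z) : IsSML Z := by
  classical
  let full : Finset ℕ := {r ∈ Finset.range N | ∀ n, r + N * n ∈ Z}
  have hfin : {m | m ∈ Z ∧ m % N ∉ full}.Finite := by
    have hclass : ∀ r ∈ Finset.range N \ full, {n | r + N * n ∈ Z}.Finite := by
      intro r hr
      obtain ⟨hrN, hr⟩ := Finset.mem_sdiff.1 hr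
      by_contra hinf
      exact hr (Finset.mem_filter.2 ⟨hrN, h r (Finset.mem_range.1 hrN) hinf⟩)
    refine ((Finset.range N \ full).finite_toSet.biUnion
      fun r hr ↦ (hclass r hr).image fun n ↦ r + N * n).subset fun m hm ↦ ?_
    refine Set.mem_biUnion (x := m % N) ?_ ⟨m / N, ?_, Nat.mod_add_div m N⟩
    · simpa [Nat.mod_lt m hN] using hm.2
    · simpa [Nat.mod_add_div] using hm.1
  refine ⟨hfin.toFinset, full.card, fun i ↦ full.equivFin.symm i, fun _ ↦ N, ?_⟩
  ext m
  simp only [Set.Finite.coe_toFinset, Set.mem_union, Set.mem_ofPred_eq, Set.mem_iUnion]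
  constructor
  · intro hm
    by_cases hfull : m % N ∈ full
    · exact .inr ⟨full.equivFin ⟨_, hfull⟩, m / N, by simp [mul_comm, Nat.mod_add_div]⟩
    · exact .inl ⟨hm, hfull⟩
  · rintro (hm | ⟨i, t, rfl⟩)
    · exact hm.1
    · rw [mul_comm]
      exact (Finset.mem_filter.1 (full.equivFin.symm i).2).2 t

section NewtonAnalytic

open Polynomial

variable {S : Type*} [CommRing S]

/-- A sequence is Newton analytic with respect to `p` if every initial segment of it is given by a
polynomial in `p * n`. This is the algebraic substitute for a `p`-adic analytic function of `n`
used here; the polynomial may depend on the segment, so that no convergence is involved. -/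
def IsNewtonAnalytic (p : S) (f : ℕ → S) : Prop :=
  ∀ m, ∃ G : S[X], ∀ n ≤ m, f n = G.eval (p * n)

theorem prod_X_sub_C_dvd_of_forall_eval_eq_zero [IsDomain S] {G : S[X]} {T : Finset S}
    (hT : ∀ t ∈ T, G.eval t = 0) : ∏ t ∈ T, (X - C t) ∣ G := by
  obtain rfl | hG := eq_or_ne G 0
  · exact dvd_zero _
  refine (Multiset.prod_X_sub_C_dvd_iff_le_roots hG T.val).2 ?_
  rw [Finset.val_le_iff_val_subset]
  exact fun t ht ↦ (mem_roots hG).2 (hT t ht)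

namespace IsNewtonAnalytic

variable [IsDomain S] [CharZero S] {p : S} {f : ℕ → S}

theorem pow_card_dvd (hf : IsNewtonAnalytic p f) (hp : p ≠ 0) {T : Finset ℕ}
    (hT : ∀ t ∈ T, f t = 0) (n : ℕ) : p ^ T.card ∣ f n := by
  obtain ⟨m, hm⟩ := (insert n T).bddAbove
  obtain ⟨G, hG⟩ := hf m
  have hinj : Function.Injective fun t : ℕ ↦ p * (t : S) :=
    (mul_right_injective₀ hp).comp Nat.cast_injective
  have hdvd : ∏ t ∈ T.map ⟨_, hinj⟩, (X - C t) ∣ G := by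
    refine prod_X_sub_C_dvd_of_forall_eval_eq_zero ?_
    simp only [Finset.forall_mem_map, Function.Embedding.coeFn_mk]
    exact fun t ht ↦ (hG t (hm (by simp [ht]))).symm.trans (hT t ht)
  rw [hG n (hm (by simp)), ← Finset.prod_const]
  refine .trans ?_ (map_dvd (evalRingHom (p * (n : S))) hdvd)
  rw [Finset.prod_map, map_prod]
  refine Finset.prod_dvd_prod_of_dvd _ _ fun t _ ↦ ⟨n - t, ?_⟩
  simp [mul_sub]

theorem eq_zero_of_infinite [IsNoetherianRing S] (hf : IsNewtonAnalytic p f) (hp : p ≠ 0)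
    (hpu : ¬ IsUnit p) (hinf : {n | f n = 0}.Infinite) (n : ℕ) : f n = 0 := by
  have hkrull : ⨅ i : ℕ, Ideal.span {p} ^ i = ⊥ :=
    Ideal.iInf_pow_eq_bot_of_isDomain _ (by rwa [Ne, Ideal.span_singleton_eq_top])
  rw [← Ideal.mem_bot, ← hkrull, Ideal.mem_iInf]
  intro i
  obtain ⟨T, hT, rfl⟩ := hinf.exists_subset_card_eq i
  rw [Ideal.span_singleton_pow, Ideal.mem_span_singleton]
  exact hf.pow_card_dvd hp (fun t ht ↦ hT ht) n

end IsNewtonAnalytic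

theorem prod_range_mul_sub_mul_eq (p : S) (n k : ℕ) :
    ∏ i ∈ Finset.range k, (p * n - p * i) = p ^ k * (k ! * n.choose k) := by
  simp_rw [← mul_sub]
  rw [Finset.prod_mul_distrib, Finset.prod_const, Finset.card_range,
    ← descPochhammer_eval_eq_prod_range, descPochhammer_eval_eq_descFactorial,
    Nat.descFactorial_eq_factorial_mul_choose, Nat.cast_mul]

theorem isNewtonAnalytic_sum_choose {p : S} (hp : ∀ k : ℕ, (k ! : S) ∣ p ^ k) (c : ℕ → S) :
    IsNewtonAnalytic p fun n ↦ ∑ k ∈ Finset.range (n + 1), n.choose k * (p ^ 2) ^ k * c k := by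
  choose q hq using hp
  -- One factor `pᵏ` absorbs the denominator of `n.choose k`, the other turns `n - i` into
  -- `p n - p i`.
  refine fun m ↦
    ⟨∑ k ∈ Finset.range (m + 1), C (q k * c k) * ∏ i ∈ Finset.range k, (X - C (p * i)),
      fun n hn ↦ ?_⟩
  have hextend : ∑ k ∈ Finset.range (n + 1), n.choose k * (p ^ 2) ^ k * c k =
      ∑ k ∈ Finset.range (m + 1), n.choose k * (p ^ 2) ^ k * c k := by
    refine Finset.sum_subset (Finset.range_mono (by lia)) fun k _ hk ↦ ?_
    simp [Nat.choose_eq_zero_of_lt (show n < k by simpa using hk)]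
  refine hextend.trans ?_
  rw [eval_finsetSum]
  refine Finset.sum_congr rfl fun k _ ↦ ?_
  have hpk : (p ^ 2) ^ k = p ^ k * (k ! * q k) := by rw [← hq, ← pow_mul, two_mul, pow_add]
  simp only [eval_mul, eval_C, eval_prod, eval_sub, eval_X, prod_range_mul_sub_mul_eq, hpk]
  ring

end NewtonAnalytic

section IsLocalRing

variable {S : Type*} [CommRing S] [IsLocalRing S] {p : ℕ}

theorem isUnit_natCast_of_coprime (hpS : ¬ IsUnit (p : S)) {m : ℕ} (hm : m.Coprime p) :
    IsUnit (m : S) := by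
  obtain ⟨a, b, hab⟩ : IsCoprime (m : S) (p : S) := by
    simpa using (Nat.isCoprime_iff_coprime.2 hm).map (Int.castRingHom S)
  refine (IsLocalRing.isUnit_or_isUnit_of_add_one hab).elim isUnit_of_mul_isUnit_right fun h ↦ ?_
  exact absurd (isUnit_of_mul_isUnit_right h) hpS

theorem natCast_factorial_dvd_pow (hp : p.Prime) (hpS : ¬ IsUnit (p : S)) (k : ℕ) :
    (k ! : S) ∣ (p : S) ^ k := by
  have : Fact p.Prime := ⟨hp⟩
  have hunit : IsUnit ((ordCompl[p] k ! : ℕ) : S) :=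
    isUnit_natCast_of_coprime hpS (Nat.coprime_ordCompl hp k.factorial_ne_zero).symm
  rw [← Nat.ordProj_mul_ordCompl_eq_self k ! p, Nat.cast_mul, hunit.mul_right_dvd, Nat.cast_pow]
  refine pow_dvd_pow _ ?_
  rw [Nat.factorization_def _ hp]
  exact padicValNat_factorial_le p k

end IsLocalRing

theorem exists_ne_zero_forall_isIntegral_pow_smul (R B : Type*) [CommRing R] [IsDomain R]
    [CommRing B] [Algebra R B] [Algebra.FiniteType R B] [Algebra.IsAlgebraic R B] :
    ∃ r : R, r ≠ 0 ∧ ∀ b : B, ∃ e : ℕ, IsIntegral R (r ^ e • b) := by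
  obtain ⟨s, hs⟩ := Algebra.FiniteType.out (R := R) (A := B)
  obtain ⟨r, hr, hrs⟩ := Algebra.IsAlgebraic.exists_integral_multiples R s
  refine ⟨r, hr, fun b ↦ ?_⟩
  have hb : b ∈ Algebra.adjoin R (s : Set B) := hs ▸ Algebra.mem_top
  induction hb using Algebra.adjoin_induction with
  | mem b hb => exact ⟨1, by simpa using hrs b hb⟩
  | algebraMap a => exact ⟨0, by simpa using isIntegral_algebraMap⟩
  | add b c _ _ hb hc =>
    obtain ⟨i, hi⟩ := hb
    obtain ⟨j, hj⟩ := hc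
    have hsum : r ^ (i + j) • (b + c) = r ^ j • r ^ i • b + r ^ i • r ^ j • c := by module
    exact ⟨i + j, hsum ▸ (hi.smul _).add (hj.smul _)⟩
  | mul b c _ _ hb hc =>
    obtain ⟨i, hi⟩ := hb
    obtain ⟨j, hj⟩ := hc
    exact ⟨i + j, by rw [pow_add, ← smul_mul_smul_comm]; exact hi.mul hj⟩

section Integrality

variable {R B : Type*} [CommRing R] [CommRing B] [Algebra R B]

theorem dvd_of_algebraMap_mul_eq_of_isIntegral (hinj : Function.Injective (algebraMap R B))
    {p r : R} (hp : Prime p) {z : B} (hz : IsIntegral R z)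
    (h : algebraMap R B p * z = algebraMap R B r) : p ∣ r := by
  have := (Ideal.span_singleton_prime hp.ne_zero).2 hp
  have : FaithfulSMul R (integralClosure R B) :=
    (faithfulSMul_iff_algebraMap_injective _ _).2
      (.of_comp (f := (integralClosure R B).val) hinj)
  obtain ⟨Q, _, hQ⟩ := Ideal.nonempty_primesOver (S := integralClosure R B) (Ideal.span {p})
  have hzr : algebraMap R (integralClosure R B) p * ⟨z, hz⟩ = algebraMap R _ r := Subtype.ext h
  have hpQ : algebraMap R (integralClosure R B) p ∈ Q :=
    (Ideal.mem_of_liesOver Q _ p).1 (Ideal.mem_span_singleton_self p)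
  have hrQ : algebraMap R (integralClosure R B) r ∈ Q := hzr ▸ Q.mul_mem_right _ hpQ
  exact Ideal.mem_span_singleton.1 ((Ideal.mem_of_liesOver Q _ r).2 hrQ)

theorem not_isUnit_algebraMap_of_forall_isIntegral_pow_smul
    (hinj : Function.Injective (algebraMap R B)) {r : R}
    (hr : ∀ b : B, ∃ e : ℕ, IsIntegral R (r ^ e • b)) {p : R} (hp : Prime p) (hpr : ¬ p ∣ r) :
    ¬ IsUnit (algebraMap R B p) := by
  intro hunit
  obtain ⟨y, hy⟩ := hunit.exists_right_inv
  obtain ⟨e, he⟩ := hr y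
  refine hpr (hp.dvd_of_dvd_pow (n := e) (dvd_of_algebraMap_mul_eq_of_isIntegral hinj hp he ?_))
  rw [mul_smul_comm, hy, Algebra.smul_def, mul_one]

theorem finite_quotient_map_of_forall_isIntegral_pow_smul [Algebra.FiniteType R B] {r : R}
    (hr : ∀ b : B, ∃ e : ℕ, IsIntegral R (r ^ e • b)) (I : Ideal R) [Finite (R ⧸ I)]
    (hrI : IsUnit (Ideal.Quotient.mk I r)) : Finite (B ⧸ I.map (algebraMap R B)) := by
  let Q := B ⧸ I.map (algebraMap R B)
  obtain ⟨u, hu⟩ := hrI.exists_left_inv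
  obtain ⟨u, rfl⟩ := Ideal.Quotient.mk_surjective u
  have hur : algebraMap R Q u * algebraMap R Q r = 1 := by
    have := congrArg (algebraMap (R ⧸ I) Q) hu
    rwa [map_mul, map_one] at this
  have : Algebra.IsIntegral R Q := by
    refine ⟨fun x ↦ ?_⟩
    obtain ⟨b, rfl⟩ := Ideal.Quotient.mk_surjective x
    obtain ⟨e, he⟩ := hr b
    have hx := (he.map (Ideal.Quotient.mkₐ R (I.map (algebraMap R B)))).smul (u ^ e)
    rwa [map_smul, smul_smul, ← mul_pow, Algebra.smul_def, map_pow, map_mul, hur, one_pow,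
      one_mul] at hx
  have : Module.Finite R Q := Algebra.IsIntegral.finite
  have : Module.Finite (R ⧸ I) Q := Module.Finite.of_restrictScalars_finite R _ _
  exact Module.finite_of_finite (R ⧸ I)

end Integrality

-- `[Algebra ℤ B]` is an argument since on a quotient ring the quotient algebra structure is found
-- first, and it does not unify with the canonical one.
theorem exists_prime_not_isUnit_finite_quotient (B : Type*) [CommRing B] [CharZero B]
    [Algebra ℤ B] [Algebra.FiniteType ℤ B] [Algebra.IsAlgebraic ℤ B] :
    ∃ p : ℕ, p.Prime ∧ ¬ IsUnit (p : B) ∧ Finite (B ⧸ Ideal.span {(p : B)}) := by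
  obtain ⟨r, hr, hint⟩ := exists_ne_zero_forall_isIntegral_pow_smul ℤ B
  obtain ⟨p, hpr, hp⟩ := Nat.exists_infinite_primes (r.natAbs + 1)
  have hpZ : Prime (p : ℤ) := Nat.prime_iff_prime_int.1 hp
  have hndvd : ¬ (p : ℤ) ∣ r := fun h ↦ by
    have := Nat.le_of_dvd (Int.natAbs_pos.2 hr) (Int.natCast_dvd.1 h)
    lia
  refine ⟨p, hp, ?_, ?_⟩
  · simpa using not_isUnit_algebraMap_of_forall_isIntegral_pow_smul
      (algebraMap ℤ B).injective_int hint hpZ hndvd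
  · have : NeZero p := ⟨hp.ne_zero⟩
    have : Finite (ℤ ⧸ Ideal.span {(p : ℤ)}) :=
      .of_equiv _ (Int.quotientSpanNatEquivZMod p).symm.toEquiv
    obtain ⟨u, v, huv⟩ : IsCoprime r p := (hpZ.coprime_iff_not_dvd.2 hndvd).symm
    have hunit : IsUnit (Ideal.Quotient.mk (Ideal.span {(p : ℤ)}) r) := by
      refine .of_mul_eq_one_right (Ideal.Quotient.mk _ u) ?_
      rw [← map_mul, ← map_one (Ideal.Quotient.mk _), Ideal.Quotient.eq,
        Ideal.mem_span_singleton]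
      exact ⟨-v, by linear_combination huv⟩
    simpa [Ideal.map_span] using finite_quotient_map_of_forall_isIntegral_pow_smul hint _ hunit

section FiniteType

variable (A : Type*) [CommRing A] [IsDomain A] [CharZero A] [Algebra.FiniteType ℤ A]

theorem exists_isPrime_isAlgebraic_quotient :
    ∃ P : Ideal A, P.IsPrime ∧ CharZero (A ⧸ P) ∧ Algebra.IsAlgebraic ℤ (A ⧸ P) := by
  have : Nontrivial (ℚ ⊗[ℤ] A) :=
    (Algebra.TensorProduct.includeRight_injective (R := ℤ) (A := ℚ) (B := A)
      (algebraMap ℤ ℚ).injective_int).nontrivial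
  obtain ⟨m, hm⟩ := Ideal.exists_maximal (ℚ ⊗[ℤ] A)
  let F := (ℚ ⊗[ℤ] A) ⧸ m
  have : Module.Finite ℚ F :=
    let : Field F := Ideal.Quotient.field m
    finite_of_finite_type_of_isJacobsonRing ℚ F
  have : CharZero F := algebraRat.charZero F
  have : Algebra.IsAlgebraic ℤ F :=
    (IsFractionRing.comap_isAlgebraic_iff (A := ℤ) (K := ℚ) (C := F)).2 inferInstance
  let χ : A →ₐ[ℤ] F :=
    ((Ideal.Quotient.mkₐ ℚ m).restrictScalars ℤ).comp Algebra.TensorProduct.includeRight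
  let ψ := Ideal.kerLiftAlg χ
  have hψ : Function.Injective ψ := Ideal.kerLiftAlg_injective χ
  exact ⟨RingHom.ker χ, RingHom.ker_isPrime _, ψ.toRingHom.charZero, .of_injective ψ hψ⟩

theorem exists_prime_finite_quotient_forall_pow_notMem :
    ∃ (p : ℕ) (I : Ideal A), p.Prime ∧ Finite (A ⧸ I) ∧ (p : A) ∈ I ∧
      ∀ n, (p : A) ^ n ∉ I ^ (n + 1) := by
  obtain ⟨P, _, _, _⟩ := exists_isPrime_isAlgebraic_quotient A
  have : Algebra.FiniteType ℤ (A ⧸ P) :=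
    .of_surjective (Ideal.Quotient.mkₐ ℤ P) (Ideal.Quotient.mkₐ_surjective ℤ P)
  obtain ⟨p, hp, hunit, _⟩ := exists_prime_not_isUnit_finite_quotient (A ⧸ P)
  let π := Ideal.Quotient.mk P
  let J := Ideal.span {(p : A ⧸ P)}
  refine ⟨p, J.comap π, hp, .of_injective _ (Ideal.quotientMap_injective (f := π)),
    by simp [J], fun n hn ↦ hunit ?_⟩
  have hdvd : (p : A ⧸ P) ^ (n + 1) ∣ p ^ n := by
    have := Ideal.le_comap_pow π (n + 1) hn
    simpa [J, Ideal.span_singleton_pow, Ideal.mem_span_singleton] using this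
  have hp0 : (p : A ⧸ P) ≠ 0 := by exact_mod_cast hp.ne_zero
  rw [pow_succ] at hdvd
  obtain ⟨y, hy⟩ := hdvd
  rw [mul_assoc, left_eq_mul₀ (pow_ne_zero _ hp0)] at hy
  exact .of_mul_eq_one _ hy

end FiniteType

section AffineBlowup

variable {A : Type*} [CommRing A] [IsDomain A] {I : Ideal A} {a : A}

/-- The affine blowup algebra `A[I/a]` of a domain `A`, realized inside the fraction field: it is
generated over `A` by the fractions `x / a` with `x ∈ I`. It makes `a` divide every element of `I`.
For `a = 0` these fractions are `0` by convention, so the notion is meaningful only for `a ≠ 0`. -/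
def affineBlowup (I : Ideal A) (a : A) : Subalgebra A (FractionRing A) :=
  Algebra.adjoin A ((fun x : A ↦ algebraMap A (FractionRing A) x / algebraMap A _ a) '' I)

theorem exists_pow_mul_eq_of_mem_affineBlowup (ha : a ≠ 0) (haI : a ∈ I) {y : FractionRing A}
    (hy : y ∈ affineBlowup I a) :
    ∃ n, ∃ x ∈ I ^ n, algebraMap A (FractionRing A) a ^ n * y = algebraMap A _ x := by
  have ha0 : algebraMap A (FractionRing A) a ≠ 0 := by simpa using ha
  induction hy using Algebra.adjoin_induction with
  | mem y hy =>
    obtain ⟨x, hx, rfl⟩ := hy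
    exact ⟨1, x, by simpa using hx, by rw [pow_one, mul_div_cancel₀ _ ha0]⟩
  | algebraMap x => exact ⟨0, x, by simp, by simp⟩
  | add y z _ _ hy hz =>
    obtain ⟨n, x, hx, hxy⟩ := hy
    obtain ⟨m, w, hw, hwz⟩ := hz
    refine ⟨n + m, x * a ^ m + a ^ n * w, ?_, ?_⟩
    · rw [pow_add]
      exact add_mem (Ideal.mul_mem_mul hx (Ideal.pow_mem_pow haI m))
        (Ideal.mul_mem_mul (Ideal.pow_mem_pow haI n) hw)
    · simp only [map_add, map_mul, map_pow, ← hxy, ← hwz]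
      ring
  | mul y z _ _ hy hz =>
    obtain ⟨n, x, hx, hxy⟩ := hy
    obtain ⟨m, w, hw, hwz⟩ := hz
    refine ⟨n + m, x * w, by rw [pow_add]; exact Ideal.mul_mem_mul hx hw, ?_⟩
    rw [map_mul, ← hxy, ← hwz]
    ring

theorem fg_affineBlowup (hI : I.FG) (a : A) : (affineBlowup I a).FG := by
  obtain ⟨s, rfl⟩ := hI
  let divBy : A →ₗ[A] FractionRing A :=
    LinearMap.mulRight A (algebraMap A _ a)⁻¹ ∘ₗ Algebra.linearMap A _
  have himage : affineBlowup (Ideal.span (s : Set A)) a = Algebra.adjoin A (divBy '' s) := by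
    rw [← Algebra.adjoin_span, ← Submodule.map_span]
    rfl
  exact Subalgebra.fg_def.2 ⟨_, s.finite_toSet.image divBy, himage.symm⟩

theorem algebraMap_dvd_algebraMap_affineBlowup (ha : a ≠ 0) {x : A} (hx : x ∈ I) :
    algebraMap A (affineBlowup I a) a ∣ algebraMap A _ x := by
  refine ⟨⟨_, Algebra.subset_adjoin ⟨x, hx, rfl⟩⟩, Subtype.ext ?_⟩
  exact (mul_div_cancel₀ _ (by simpa using ha)).symm

theorem not_isUnit_algebraMap_affineBlowup (ha : a ≠ 0) (haI : a ∈ I)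
    (hpow : ∀ n, a ^ n ∉ I ^ (n + 1)) : ¬ IsUnit (algebraMap A (affineBlowup I a) a) := by
  intro hunit
  obtain ⟨⟨y, hy⟩, hay⟩ := hunit.exists_right_inv
  obtain ⟨n, x, hx, hxy⟩ := exists_pow_mul_eq_of_mem_affineBlowup ha haI hy
  have hay : algebraMap A (FractionRing A) a * y = 1 := congrArg Subtype.val hay
  have hax : a ^ n = a * x := by
    apply IsFractionRing.injective A (FractionRing A)
    rw [map_mul, ← hxy, map_pow, mul_left_comm, hay, mul_one]
  exact hpow n (hax ▸ pow_succ' I n ▸ Ideal.mul_mem_mul haI hx)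

end AffineBlowup

universe u in
theorem exists_injective_isLocalRing_forall_dvd {A : Type u} [CommRing A] [IsDomain A]
    [IsNoetherianRing A] {I : Ideal A} {a : A} (ha : a ≠ 0) (haI : a ∈ I)
    (hpow : ∀ n, a ^ n ∉ I ^ (n + 1)) :
    ∃ (S : Type u) (_ : CommRing S) (_ : IsDomain S) (_ : IsNoetherianRing S) (_ : IsLocalRing S)
      (ι : A →+* S), Function.Injective ι ∧ ¬ IsUnit (ι a) ∧ ∀ x ∈ I, ι a ∣ ι x := by
  let A' := affineBlowup I a
  have : Algebra.FiniteType A A' :=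
    A'.fg_iff_finiteType.1 (fg_affineBlowup (IsNoetherian.noetherian I) a)
  have : IsNoetherianRing A' := Algebra.FiniteType.isNoetherianRing A A'
  obtain ⟨m, _, ham⟩ :=
    exists_max_ideal_of_mem_nonunits (not_isUnit_algebraMap_affineBlowup ha haI hpow)
  let S := Localization.AtPrime m
  refine ⟨S, inferInstance, inferInstance,
    IsLocalization.isNoetherianRing m.primeCompl S inferInstance, inferInstance,
    (algebraMap A' S).comp (algebraMap A A'), ?_, ?_, ?_⟩
  · exact (IsLocalization.injective S m.primeCompl_le_nonZeroDivisors).comp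
      (FaithfulSMul.algebraMap_injective A A')
  · exact fun hunit ↦ (IsLocalization.AtPrime.isUnit_to_map_iff S m _).1 hunit ham
  · exact fun x hx ↦ map_dvd (algebraMap A' S) (algebraMap_dvd_algebraMap_affineBlowup ha hx)

theorem pow_dvd_map_of_mem_pow {A S : Type*} [CommSemiring A] [CommSemiring S] {ι : A →+* S}
    {I : Ideal A} {c : S} (h : ∀ x ∈ I, c ∣ ι x) {n : ℕ} {x : A} (hx : x ∈ I ^ n) :
    c ^ n ∣ ι x := by
  have hI : I ≤ (Ideal.span {c}).comap ι := fun x hx ↦ Ideal.mem_span_singleton.2 (h x hx)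
  have hmem := (Ideal.pow_right_mono hI n).trans (Ideal.le_comap_pow ι n) hx
  rwa [Ideal.span_singleton_pow, Ideal.mem_comap, Ideal.mem_span_singleton] at hmem

section Matrix

variable {m d l : Type*} [Fintype d] [DecidableEq d]

theorem mul_one_add_smul_pow_mul_apply {S : Type*} [CommSemiring S] (c : S) (E : Matrix d d S)
    (U : Matrix m d S) (W : Matrix d l S) (n : ℕ) (i : m) (j : l) :
    (U * (1 + c • E) ^ n * W : Matrix m l S) i j =
      ∑ k ∈ Finset.range (n + 1), n.choose k * c ^ k * (U * E ^ k * W : Matrix m l S) i j := by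
  rw [add_comm, (Commute.one_right _).add_pow, Matrix.mul_sum, Matrix.sum_mul, Matrix.sum_apply]
  refine Finset.sum_congr rfl fun k _ ↦ ?_
  rw [one_pow, mul_one, smul_pow, ← nsmul_eq_mul', ← Nat.cast_smul_eq_nsmul S, smul_smul,
    Matrix.mul_smul, Matrix.smul_mul, Matrix.smul_apply, smul_eq_mul]

theorem mul_one_add_smul_pow_mul_eq_zero_of_infinite {S : Type*} [CommRing S] [IsDomain S]
    [CharZero S] [IsNoetherianRing S] [IsLocalRing S] {p : ℕ} (hp : p.Prime)
    (hpS : ¬ IsUnit (p : S)) (E : Matrix d d S) (U : Matrix m d S) (W : Matrix d l S)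
    (hinf : {n : ℕ | U * (1 + (p : S) ^ 2 • E) ^ n * W = 0}.Infinite) (n : ℕ) :
    U * (1 + (p : S) ^ 2 • E) ^ n * W = 0 := by
  ext i j
  have hf : IsNewtonAnalytic (p : S)
      fun n ↦ (U * (1 + (p : S) ^ 2 • E) ^ n * W : Matrix m l S) i j := by
    simp_rw [mul_one_add_smul_pow_mul_apply]
    exact isNewtonAnalytic_sum_choose (natCast_factorial_dvd_pow hp hpS) _
  exact hf.eq_zero_of_infinite (Nat.cast_ne_zero.2 hp.ne_zero) hpS
    (hinf.mono fun n hn ↦ by exact congrFun₂ hn i j) n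

theorem exists_pos_forall_pow_sub_one_apply_mem {A : Type*} [CommRing A] (M : (Matrix d d A)ˣ)
    (I : Ideal A) [Finite (A ⧸ I)] : ∃ N > 0, ∀ i j, ((M : Matrix d d A) ^ N - 1) i j ∈ I := by
  let π := (Ideal.Quotient.mk I).mapMatrix (m := d)
  obtain ⟨N, hN, hpow⟩ :=
    isOfFinOrder_iff_pow_eq_one.1 (isOfFinOrder_of_finite (Units.map π.toMonoidHom M))
  refine ⟨N, hN, fun i j ↦ Ideal.Quotient.eq_zero_iff_mem.1 ?_⟩
  have hπ : π ((M : Matrix d d A) ^ N - 1) = 0 := by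
    rw [map_sub, map_pow, map_one, sub_eq_zero]
    exact congrArg Units.val hpow
  exact congrFun₂ hπ i j

omit [Fintype d] in
theorem exists_eq_one_add_smul_of_forall_dvd {S : Type*} [CommRing S] {c : S} {X : Matrix d d S}
    (h : ∀ i j, c ∣ (X - 1) i j) : ∃ E : Matrix d d S, X = 1 + c • E := by
  choose E hE using h
  refine ⟨.of E, ?_⟩
  rw [← sub_eq_iff_eq_add']
  ext i j
  exact hE i j

theorem exists_pos_forall_mul_pow_mul_eq_zero_of_infinite {A : Type*} [CommRing A] [IsDomain A]
    [CharZero A] [Algebra.FiniteType ℤ A] (M : (Matrix d d A)ˣ) :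
    ∃ N > 0, ∀ (U : Matrix m d A) (W : Matrix d l A),
      {n : ℕ | U * ((M : Matrix d d A) ^ N) ^ n * W = 0}.Infinite →
        ∀ n, U * ((M : Matrix d d A) ^ N) ^ n * W = 0 := by
  have : IsNoetherianRing A := Algebra.FiniteType.isNoetherianRing ℤ A
  obtain ⟨p, I, hp, _, hpI, hpow⟩ := exists_prime_finite_quotient_forall_pow_notMem A
  obtain ⟨S, _, _, _, _, ι, hι, hpS, hdvd⟩ :=
    exists_injective_isLocalRing_forall_dvd (Nat.cast_ne_zero.2 hp.ne_zero) hpI hpow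
  rw [map_natCast] at hpS hdvd
  have : CharZero S := (ι.charZero_iff hι).1 inferInstance
  have : Finite (A ⧸ I ^ 2) := Ideal.finite_quotient_pow (IsNoetherian.noetherian I) 2
  obtain ⟨N, hN, hmem⟩ := exists_pos_forall_pow_sub_one_apply_mem M (I ^ 2)
  obtain ⟨E, hE⟩ : ∃ E, ι.mapMatrix ((M : Matrix d d A) ^ N) = 1 + (p : S) ^ 2 • E := by
    refine exists_eq_one_add_smul_of_forall_dvd fun i j ↦ ?_
    rw [← map_one ι.mapMatrix, ← map_sub]
    exact pow_dvd_map_of_mem_pow hdvd (hmem i j)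
  refine ⟨N, hN, fun U W ↦ ?_⟩
  have hmap (n : ℕ) : U * ((M : Matrix d d A) ^ N) ^ n * W = 0 ↔
      U.map ι * (1 + (p : S) ^ 2 • E) ^ n * W.map ι = 0 := by
    rw [← hE, ← map_pow, RingHom.mapMatrix_apply, ← Matrix.map_mul, ← Matrix.map_mul,
      ← (Matrix.map_injective hι).eq_iff, Matrix.map_zero ι (map_zero ι)]
  simp_rw [hmap]
  exact mul_one_add_smul_pow_mul_eq_zero_of_infinite hp hpS E _ _

theorem isSML_mul_pow_mul_eq_zero_of_finiteType {A : Type*} [CommRing A] [IsDomain A] [CharZero A]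
    [Algebra.FiniteType ℤ A] (M : (Matrix d d A)ˣ) (U : Matrix m d A) (W : Matrix d l A) :
    IsSML {n | U * (M : Matrix d d A) ^ n * W = 0} := by
  obtain ⟨N, hN, h⟩ := exists_pos_forall_mul_pow_mul_eq_zero_of_infinite (m := m) (l := l) M
  refine isSML_of_forall_residue_class hN fun r _ hinf ↦ ?_
  simp only [Set.mem_ofPred_eq, pow_add, pow_mul, ← Matrix.mul_assoc U] at hinf ⊢
  exact h _ _ hinf

theorem exists_matrix_map_val_eq {R K : Type*} [CommSemiring R] [Semiring K] [Algebra R K]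
    (A : Subalgebra R K) {X : Matrix m l K} (hX : ∀ i j, X i j ∈ A) :
    ∃ X' : Matrix m l A, X'.map A.val = X :=
  ⟨.of fun i j ↦ ⟨X i j, hX i j⟩, rfl⟩

theorem exists_matrix_units_map_val_eq {R K : Type*} [CommSemiring R] [Semiring K] [Algebra R K]
    (A : Subalgebra R K) {M : (Matrix d d K)ˣ} (hM : ∀ i j, M.1 i j ∈ A)
    (hM' : ∀ i j, M⁻¹.1 i j ∈ A) : ∃ M' : (Matrix d d A)ˣ, M'.1.map A.val = M.1 := by
  obtain ⟨X, hX⟩ := exists_matrix_map_val_eq A hM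
  obtain ⟨Y, hY⟩ := exists_matrix_map_val_eq A hM'
  have hinj : Function.Injective A.val.mapMatrix :=
    Matrix.map_injective (m := d) (n := d) Subtype.val_injective
  refine ⟨⟨X, Y, hinj ?_, hinj ?_⟩, hX⟩ <;>
    simp only [map_mul, map_one, AlgHom.mapMatrix_apply, hX, hY, Units.mul_inv, Units.inv_mul]

theorem isSML_mul_pow_mul_eq_zero [Finite m] [Finite l] {K : Type*} [CommRing K] [IsDomain K]
    [CharZero K] (M : (Matrix d d K)ˣ) (U : Matrix m d K) (W : Matrix d l K) :
    IsSML {n | U * (M : Matrix d d K) ^ n * W = 0} := by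
  let entries : Set K := Set.range U.uncurry ∪ Set.range M.1.uncurry ∪
    Set.range M⁻¹.1.uncurry ∪ Set.range W.uncurry
  have hfin : entries.Finite := by
    refine .union (.union (.union ?_ ?_) ?_) ?_ <;> exact Set.finite_range _
  let A := Algebra.adjoin ℤ entries
  have : Algebra.FiniteType ℤ A := A.fg_iff_finiteType.1 (Subalgebra.fg_def.2 ⟨_, hfin, rfl⟩)
  obtain ⟨U', hU'⟩ := exists_matrix_map_val_eq A (X := U) fun i j ↦
    Algebra.subset_adjoin (.inl (.inl (.inl ⟨(i, j), rfl⟩)))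
  obtain ⟨M', hM'⟩ := exists_matrix_units_map_val_eq A (M := M)
    (fun i j ↦ Algebra.subset_adjoin (.inl (.inl (.inr ⟨(i, j), rfl⟩))))
    (fun i j ↦ Algebra.subset_adjoin (.inl (.inr ⟨(i, j), rfl⟩)))
  obtain ⟨W', hW'⟩ := exists_matrix_map_val_eq A (X := W) fun i j ↦
    Algebra.subset_adjoin (.inr ⟨(i, j), rfl⟩)
  convert isSML_mul_pow_mul_eq_zero_of_finiteType M' U' W' using 3 with n
  rw [← (Matrix.map_injective (f := A.val) Subtype.val_injective).eq_iff,
    Matrix.map_zero _ (map_zero _), Matrix.map_mul, Matrix.map_mul,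
    ← AlgHom.mapMatrix_apply _ (_ ^ _), map_pow, AlgHom.mapMatrix_apply, hU', hM', hW']

end Matrix

theorem isSML_comp_pow_comp_eq_zero {K V X Y : Type*} [Field K] [CharZero K]
    [AddCommGroup V] [Module K V] [FiniteDimensional K V] [AddCommGroup X] [Module K X]
    [FiniteDimensional K X] [AddCommGroup Y] [Module K Y] [FiniteDimensional K Y]
    (σ : V ≃ₗ[K] V) (f : X →ₗ[K] V) (g : V →ₗ[K] Y) :
    IsSML {n : ℕ | g ∘ₗ ((σ ^ n : V ≃ₗ[K] V) : V →ₗ[K] V) ∘ₗ f = 0} := by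
  let bV := Module.finBasis K V
  let bX := Module.finBasis K X
  let bY := Module.finBasis K Y
  let toUnits : (V ≃ₗ[K] V) →* (Matrix _ _ K)ˣ :=
    (Units.map (LinearMap.toMatrixAlgEquiv bV).toMonoidHom).comp
      (LinearMap.GeneralLinearGroup.generalLinearEquiv K V).symm.toMonoidHom
  have hpow (n : ℕ) : (toUnits σ : Matrix _ _ K) ^ n =
      LinearMap.toMatrix bV bV ((σ ^ n : V ≃ₗ[K] V) : V →ₗ[K] V) := by
    rw [← Units.val_pow_eq_pow_val, ← map_pow]
    rfl
  convert isSML_mul_pow_mul_eq_zero (toUnits σ) (g.toMatrix bV bY) (f.toMatrix bX bV)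
    using 3 with n
  rw [hpow, Matrix.mul_assoc, ← LinearMap.toMatrix_comp, ← LinearMap.toMatrix_comp,
    EmbeddingLike.map_eq_zero_iff]

theorem orbit_in_hyperplane_is_SML_general {K V : Type*} [Field K] [CharZero K]
    [AddCommGroup V] [Module K V] [FiniteDimensional K V]
    (σ : V ≃ₗ[K] V) (L R : Submodule K V) :
    IsSML {n : ℕ |
      L.map ((σ ^ n : V ≃ₗ[K] V) : V →ₗ[K] V) ≤ R} := by
  convert isSML_comp_pow_comp_eq_zero σ L.subtype R.mkQ using 3 with n
  rw [← LinearMap.range_le_ker_iff, LinearMap.range_comp, L.range_subtype, R.ker_mkQ]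

theorem orbit_in_hyperplane_is_SML {K V : Type*} [Field K] [CharZero K]
    [AddCommGroup V] [Module K V] [FiniteDimensional K V]
    (σ : V ≃ₗ[K] V) (L R : Submodule K V)
    (hL : Module.finrank K L = 1)
    (hR : Module.finrank K R + 1 = Module.finrank K V) :
    IsSML {n : ℕ |
      L.map ((σ ^ n : V ≃ₗ[K] V) : V →ₗ[K] V) ≤ R} :=
  orbit_in_hyperplane_is_SML_general σ L R
end

section
/- Let (a_n) be a linearly recurrent sequence over a field K of characteristic zero, and define c_n = 1 if a_n = 0 and c_n = 0 otherwise. Then the sequence (c_n) is eventually periodic. -/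
open scoped Classical

/-!
Up to finitely many terms, a linear recurrent sequence in `K` has the form `n ↦ φ (x ^ n)` for a
unit `x` of a finite `K`-algebra and a linear functional `φ`: take for `x` the class of `X` modulo
the characteristic polynomial stripped of its factors `X`. The field `K` is algebraic over a
polynomial ring `A` over `ℤ`, and multiplying `x` by an element of `A`, which does not move the
zeros, makes it integral over `A`, so that `φ` may be taken with values in `A`.

Choose an integer point `τ` and an odd prime `p` such that `x` is invertible modulo the maximal
ideal of `A` at `τ` modulo `p`. The residue algebra is finite, so `x ^ r ≡ 1` for some `r > 0`. At
every integer point congruent to `τ` modulo `p`, the `k`-th difference of `n ↦ φ (x ^ (r * n + j))`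
specializes to a multiple of `p ^ k`. Since `k! * p ^ (k / 2)` divides `p ^ k` for odd `p`, the
Newton interpolation polynomials of the specialized sequence have degree less than `2 * s` modulo
`p ^ s`; if there are infinitely many zeros, they vanish modulo `p ^ s` for every `s`. As these
integer points are Zariski dense, the sequence then vanishes identically along the progression
(Hansel's argument).
-/

namespace SkolemMahlerLech

open Polynomial Filter

section Hansel

variable {R : Type*} [CommRing R]

lemma map_eq_zero_of_degree_map_lt_card {S : Type*} [IsDomain R] [CommRing S] (φ : R →+* S)
    {P : R[X]} (Z : Finset R) (hZ : ∀ z ∈ Z, P.eval z = 0)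
    (hdeg : (P.map φ).degree < Z.card) : P.map φ = 0 := by
  rcases eq_or_ne P 0 with rfl | hP
  · exact Polynomial.map_zero φ
  nontriviality S
  let W : R[X] := (Z.val.map fun z ↦ X - C z).prod
  have hW : W.Monic := monic_prod_X_sub_C id Z
  have hWP : W ∣ P := (Multiset.prod_X_sub_C_dvd_iff_le_roots hP Z.val).mpr <|
    (Multiset.le_iff_subset Z.nodup).mpr fun z hz ↦ (mem_roots hP).mpr (hZ z hz)
  by_contra hne
  refine (hW.map φ).not_dvd_of_degree_lt hne ?_ (map_dvd (mapRingHom φ) hWP)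
  rwa [hW.degree_map, degree_eq_natDegree hW.ne_zero, natDegree_multiset_prod_X_sub_C_eq_card]

/-- The Newton interpolation polynomial of degree `N`, written in the falling factorials rather than
the binomial coefficients, so that `c k` stands for the `k`-th difference at `0` divided by `k!`. -/
noncomputable def newtonPolynomial (c : ℕ → R) (N : ℕ) : R[X] :=
  ∑ k ∈ Finset.range (N + 1), C (c k) * descPochhammer R k

lemma eval_newtonPolynomial {f c : ℕ → R} (hc : ∀ k, (k.factorial : R) * c k = (fwdDiff 1)^[k] f 0)
    {n N : ℕ} (hn : n ≤ N) : (newtonPolynomial c N).eval (n : R) = f n := by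
  have hterm (k : ℕ) : (C (c k) * descPochhammer R k).eval (n : R)
      = n.choose k • (fwdDiff 1)^[k] f 0 := by
    rw [eval_mul, eval_C, descPochhammer_eval_eq_descFactorial,
      Nat.descFactorial_eq_factorial_mul_choose, ← hc, nsmul_eq_mul, Nat.cast_mul]
    ring
  have hnewton := shift_eq_sum_fwdDiff_iter 1 f n 0
  rw [zero_add, smul_eq_mul, mul_one] at hnewton
  rw [hnewton, newtonPolynomial, eval_finsetSum, Finset.sum_congr rfl fun k _ ↦ hterm k]
  refine (Finset.sum_subset (Finset.range_mono (by omega)) fun k _ hk ↦ ?_).symm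
  rw [Nat.choose_eq_zero_of_lt (by simpa using hk), zero_smul]

lemma degree_map_newtonPolynomial_lt {S : Type*} [CommRing S] (φ : R →+* S) {c : ℕ → R} {d : ℕ}
    (hc : ∀ k, d ≤ k → φ (c k) = 0) (N : ℕ) : ((newtonPolynomial c N).map φ).degree < d := by
  rw [newtonPolynomial, Polynomial.map_sum]
  refine (degree_sum_le _ _).trans_lt ((Finset.sup_lt_iff (WithBot.bot_lt_coe d)).mpr fun k _ ↦ ?_)
  rw [Polynomial.map_mul, map_C, descPochhammer_map]
  rcases le_or_gt d k with hk | hk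
  · rw [hc k hk, C_0, zero_mul, degree_zero]
    exact WithBot.bot_lt_coe d
  · calc (C (φ (c k)) * descPochhammer S k).degree
        ≤ (C (φ (c k))).degree + ((descPochhammer ℤ k).map (Int.castRingHom S)).degree := by
          rw [descPochhammer_map]
          exact degree_mul_le _ _
      _ ≤ 0 + k := by
          refine add_le_add degree_C_le (degree_map_le.trans (degree_le_of_natDegree_le ?_))
          rw [descPochhammer_natDegree]
      _ < d := by
          rw [zero_add]
          exact_mod_cast hk

variable {p : ℕ} [Fact p.Prime]

lemma factorial_mul_pow_half_dvd_pow (hp : p ≠ 2) (k : ℕ) :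
    (k.factorial : ℤ_[p]) * (p : ℤ_[p]) ^ (k / 2) ∣ (p : ℤ_[p]) ^ k := by
  have hk : (k.factorial : ℤ_[p]) ≠ 0 := by exact_mod_cast k.factorial_ne_zero
  have hval : (k.factorial : ℤ_[p]).valuation = padicValNat p k.factorial := by
    exact_mod_cast (PadicInt.valuation_coe (k.factorial : ℤ_[p])).symm.trans
      (Padic.valuation_natCast k.factorial)
  have hlegendre : padicValNat p k.factorial + k / 2 ≤ k := by
    have h2 : 2 ≤ p - 1 := by have := (Fact.out : p.Prime).two_le; omega
    have := (Nat.mul_le_mul_right (padicValNat p k.factorial) h2).trans_eq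
      (sub_one_mul_padicValNat_factorial k)
    omega
  rw [PadicInt.unitCoeff_spec hk, hval, mul_assoc, ← pow_add, Units.mul_left_dvd]
  exact pow_dvd_pow _ hlegendre

theorem eq_zero_of_pow_dvd_fwdDiff (hp : p ≠ 2) {f : ℕ → ℤ_[p]}
    (hf : ∀ k, (p : ℤ_[p]) ^ k ∣ (fwdDiff 1)^[k] f 0) (hinf : {n | f n = 0}.Infinite) (m : ℕ) :
    f m = 0 := by
  choose c hcf hc using fun k ↦
    show ∃ c, (k.factorial : ℤ_[p]) * c = (fwdDiff 1)^[k] f 0 ∧ (p : ℤ_[p]) ^ (k / 2) ∣ c by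
      obtain ⟨e, he⟩ := (factorial_mul_pow_half_dvd_pow hp k).trans (hf k)
      exact ⟨p ^ (k / 2) * e, by rw [he, mul_assoc], dvd_mul_right _ _⟩
  have hdvd (s : ℕ) : (p : ℤ_[p]) ^ s ∣ f m := by
    obtain ⟨Z, hZ, hcard⟩ := hinf.exists_subset_card_eq (2 * s)
    let N := max m (Z.sup id)
    let φ := Ideal.Quotient.mk (Ideal.span {(p : ℤ_[p]) ^ s})
    have hφ (x : ℤ_[p]) : φ x = 0 ↔ (p : ℤ_[p]) ^ s ∣ x := Ideal.Quotient.eq_zero_iff_dvd _ _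
    have hzero : (newtonPolynomial c N).map φ = 0 := by
      refine map_eq_zero_of_degree_map_lt_card φ (Z.map Nat.castEmbedding) ?_ ?_
      · simp only [Finset.mem_map, Nat.castEmbedding_apply, forall_exists_index, and_imp,
          forall_apply_eq_imp_iff₂]
        intro n hn
        have hnN : n ≤ N := (Finset.le_sup (f := id) hn).trans (le_max_right _ _)
        exact (eval_newtonPolynomial hcf hnN).trans (hZ hn)
      · rw [Finset.card_map, hcard]
        refine degree_map_newtonPolynomial_lt φ (fun k hk ↦ (hφ _).mpr ?_) N
        exact (pow_dvd_pow _ (by omega)).trans (hc k)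
    rw [← hφ, ← eval_newtonPolynomial hcf (le_max_left m (Z.sup id)), ← eval_map_apply, hzero,
      eval_zero]
  by_contra hne
  exact FiniteMultiplicity.not_iff_forall.mpr hdvd
    (FiniteMultiplicity.of_prime_left PadicInt.prime_p hne)

end Hansel

section Dichotomy

/-- On each arithmetic progression `j, j + r, j + 2r, …` the sequence `u` vanishes identically or
only finitely often. The starting point `j` may exceed `r`, so tails of residue classes are
included. -/
def HasZeroDichotomy {M : Type*} [Zero M] (r : ℕ) (u : ℕ → M) : Prop :=
  ∀ j, {n | u (r * n + j) = 0}.Infinite → ∀ n, u (r * n + j) = 0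

/-- The ring homomorphisms `A →+* ℤ_[p]` that carry `I` into the maximal ideal, written as the span
of `p`, jointly separate the points of `A`. It lets `p`-adic vanishing be pulled back to `A`. -/
def IsPadicallySeparating {A : Type*} [CommRing A] (p : ℕ) [Fact p.Prime] (I : Ideal A) : Prop :=
  ∀ a : A, (∀ η : A →+* ℤ_[p], I ≤ (Ideal.span {(p : ℤ_[p])}).comap η → η a = 0) → a = 0

lemma fwdDiff_iter_map_mul_pow {B G : Type*} [CommRing B] [AddCommGroup G] (ψ : B →+ G) (v u : B)
    (k : ℕ) :
    (fwdDiff 1)^[k] (fun n : ℕ ↦ ψ (v * u ^ n)) = fun n ↦ ψ (v * (u - 1) ^ k * u ^ n) := by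
  induction k with
  | zero => simp only [Function.iterate_zero, id_eq, pow_zero, mul_one]
  | succ k ih =>
    funext n
    rw [Function.iterate_succ_apply', ih, fwdDiff, ← map_sub]
    congr 1
    ring

section Algebra

variable {A B : Type*} [CommRing A] [CommRing B] [Algebra A B]

lemma linearMap_apply_mem_smul_top {M : Type*} [AddCommGroup M] [Module A M] {I : Ideal A}
    (ψ : B →ₗ[A] M) {b : B} (hb : b ∈ I.map (algebraMap A B)) : ψ b ∈ I • (⊤ : Submodule A M) := by
  have hb' : b ∈ I • (⊤ : Submodule A B) := by rwa [Ideal.smul_top_eq_map]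
  have hψ := Submodule.mem_map_of_mem (f := ψ) hb'
  rw [Submodule.map_smul''] at hψ
  exact Submodule.smul_mono le_rfl le_top hψ

lemma IsPadicallySeparating.hasZeroDichotomy {p : ℕ} [Fact p.Prime] (hp : p ≠ 2) {I : Ideal A}
    (hI : IsPadicallySeparating p I) {w : B} {r : ℕ} (hw : w ^ r - 1 ∈ I.map (algebraMap A B))
    (ψ : B →ₗ[A] A) : HasZeroDichotomy r (fun n ↦ ψ (w ^ n)) := by
  intro j hinf n
  refine hI _ fun η hη ↦ ?_
  let f : ℕ → ℤ_[p] := fun m ↦ (η : A →+ ℤ_[p]).comp (ψ : B →+ A) (w ^ j * (w ^ r) ^ m)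
  have hf (m : ℕ) : f m = η (ψ (w ^ (r * m + j))) := by
    rw [add_comm, pow_add, pow_mul]
    rfl
  rw [← hf]
  refine eq_zero_of_pow_dvd_fwdDiff hp (fun k ↦ ?_) (hinf.mono fun m hm ↦ ?_) n
  · have hmem : w ^ j * (w ^ r - 1) ^ k ∈ (I ^ k).map (algebraMap A B) := by
      rw [Ideal.map_pow]
      exact Ideal.mul_mem_left _ _ (Ideal.pow_mem_pow hw k)
    have hψ : ψ (w ^ j * (w ^ r - 1) ^ k) ∈ I ^ k := by
      simpa only [smul_eq_mul, Ideal.mul_top] using linearMap_apply_mem_smul_top ψ hmem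
    have hη' : I ^ k ≤ (Ideal.span {(p : ℤ_[p]) ^ k}).comap η := by
      rw [← Ideal.span_singleton_pow]
      exact (Ideal.pow_right_mono hη k).trans (Ideal.le_comap_pow η k)
    simp only [f, fwdDiff_iter_map_mul_pow, pow_zero, mul_one]
    exact Ideal.mem_span_singleton.mp (hη' hψ)
  · exact (hf m).trans ((congrArg η hm).trans (map_zero η))

lemma finite_quotient_map_algebraMap (I : Ideal A) [Finite (A ⧸ I)] [Module.Finite A B] :
    Finite (B ⧸ I.map (algebraMap A B)) := by
  have : Module.Finite (A ⧸ I) (B ⧸ I.map (algebraMap A B)) :=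
    Module.Finite.of_restrictScalars_finite A _ _
  exact Module.finite_of_finite (A ⧸ I)

lemma exists_pow_sub_one_mem {J : Ideal B} [Finite (B ⧸ J)] {w : B}
    (hw : IsUnit (Ideal.Quotient.mk J w)) : ∃ r, 0 < r ∧ w ^ r - 1 ∈ J := by
  obtain ⟨u, hu⟩ := hw
  obtain ⟨r, hr, hur⟩ := (isOfFinOrder_of_finite u).exists_pow_eq_one
  refine ⟨r, hr, Ideal.Quotient.eq.mp ?_⟩
  rw [map_pow, ← hu, ← Units.val_pow_eq_pow_val, hur, Units.val_one, map_one]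

lemma exists_pow_sub_one_mem_map_algebraMap [Module.Finite A B] (I : Ideal A) [I.IsMaximal]
    [Finite (A ⧸ I)] {w : B} {a : A} (ha : a ∉ I) (hwa : w ∣ algebraMap A B a) :
    ∃ r, 0 < r ∧ w ^ r - 1 ∈ I.map (algebraMap A B) := by
  have := finite_quotient_map_algebraMap (B := B) I
  let _ := Ideal.Quotient.field I
  have ha' : IsUnit (Ideal.Quotient.mk I a) := isUnit_iff_ne_zero.mpr
    (mt Ideal.Quotient.eq_zero_iff_mem.mp ha)
  refine exists_pow_sub_one_mem (isUnit_of_dvd_unit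
    (map_dvd (Ideal.Quotient.mk (I.map (algebraMap A B))) hwa) ?_)
  exact ha'.map (algebraMap (A ⧸ I) (B ⧸ I.map (algebraMap A B)))

end Algebra

section LinearMap

variable {A N : Type*} [CommRing A] [IsDomain A] [AddCommGroup N] [Module A N] [Module.Finite A N]

lemma exists_linearMap_algebraMap_eq_smul {L : Type*} [Field L] [Algebra A L] [IsFractionRing A L]
    (θ : N →ₗ[A] L) :
    ∃ δ : A, δ ≠ 0 ∧ ∃ ψ : N →ₗ[A] A, ∀ y, algebraMap A L (ψ y) = δ • θ y := by
  obtain ⟨s, hs⟩ := Module.Finite.fg_top (R := A) (M := N)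
  obtain ⟨δ, hδ⟩ := IsLocalization.exist_integer_multiples (nonZeroDivisors A) s θ
  have hrange : (⊤ : Submodule A N)
      ≤ (LinearMap.range (Algebra.linearMap A L)).comap ((δ : A) • θ) := by
    rw [← hs, Submodule.span_le]
    exact hδ
  let e := LinearEquiv.ofInjective (Algebra.linearMap A L) (IsFractionRing.injective A L)
  refine ⟨δ, nonZeroDivisors.coe_ne_zero δ, e.symm.toLinearMap ∘ₗ
    ((δ : A) • θ).codRestrict _ fun y ↦ hrange trivial, fun y ↦ ?_⟩
  exact congrArg Subtype.val (e.apply_symm_apply _)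

lemma exists_linearMap_ker_le_ker (L : Type*) [Field L] [Algebra A L] [IsFractionRing A L]
    {V : Type*} [AddCommGroup V] [Module L V] [Module A V] [IsScalarTower A L V] (φ : N →ₗ[A] V)
    {x : N} (hx : φ x ≠ 0) :
    ∃ ψ : N →ₗ[A] A, LinearMap.ker φ ≤ LinearMap.ker ψ ∧ ψ x ≠ 0 := by
  obtain ⟨l, hl⟩ : ∃ l : V →ₗ[L] L, l (φ x) ≠ 0 := by
    simpa only [ne_eq, not_forall] using mt (Module.forall_dual_apply_eq_zero_iff L (φ x)).mp hx
  obtain ⟨δ, hδ, ψ, hψ⟩ := exists_linearMap_algebraMap_eq_smul (l.restrictScalars A ∘ₗ φ)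
  have hzero (y : N) : ψ y = 0 ↔ l (φ y) = 0 := by
    rw [← FaithfulSMul.algebraMap_eq_zero_iff A L, hψ, smul_eq_zero_iff_right hδ]
    rfl
  refine ⟨ψ, fun y hy ↦ (hzero y).mpr ?_, mt (hzero x).mp hl⟩
  rw [LinearMap.mem_ker.mp hy, map_zero]

lemma HasZeroDichotomy.of_linearMap (L : Type*) [Field L] [Algebra A L] [IsFractionRing A L]
    {V : Type*} [AddCommGroup V] [Module L V] [Module A V] [IsScalarTower A L V]
    {r : ℕ} {u : ℕ → N} (h : ∀ ψ : N →ₗ[A] A, HasZeroDichotomy r (fun n ↦ ψ (u n)))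
    (φ : N →ₗ[A] V) : HasZeroDichotomy r (fun n ↦ φ (u n)) := by
  intro j hinf n
  by_contra hne
  obtain ⟨ψ, hker, hψ⟩ := exists_linearMap_ker_le_ker L φ hne
  exact hψ (h ψ j (hinf.mono fun m hm ↦ hker hm) n)

end LinearMap

end Dichotomy

section MvPolynomial

variable {ι : Type*}

lemma isPadicallySeparating_ker_eval (p : ℕ) [Fact p.Prime] (τ : ι → ℤ) :
    IsPadicallySeparating p
      (RingHom.ker ((Int.castRingHom (ZMod p)).comp (MvPolynomial.eval τ))) := by
  intro a ha
  have hinf (i : ι) : (Set.range fun k : ℤ ↦ τ i + p * k).Infinite :=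
    Set.infinite_range_of_injective fun k l hkl ↦ by
      simpa [(Fact.out : p.Prime).ne_zero] using hkl
  refine MvPolynomial.funext_set _ hinf fun x hx ↦ ?_
  have hcongr : (Int.castRingHom (ZMod p)).comp (MvPolynomial.eval x)
      = (Int.castRingHom (ZMod p)).comp (MvPolynomial.eval τ) := by
    refine MvPolynomial.ringHom_ext (fun n ↦ by simp) fun i ↦ ?_
    obtain ⟨k, hk⟩ := hx i trivial
    simp [← hk]
  have hx := ha ((Int.castRingHom ℤ_[p]).comp (MvPolynomial.eval x)) fun b hb ↦ by
    rw [← hcongr, RingHom.mem_ker, RingHom.comp_apply, eq_intCast,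
      ZMod.intCast_zmod_eq_zero_iff_dvd] at hb
    rw [Ideal.mem_comap, Ideal.mem_span_singleton]
    exact_mod_cast map_dvd (Int.castRingHom ℤ_[p]) hb
  rw [map_zero]
  exact Int.cast_eq_zero.mp hx

lemma exists_prime_intCast_eval_ne_zero {a : MvPolynomial ι ℤ} (ha : a ≠ 0) :
    ∃ p : ℕ, p.Prime ∧ p ≠ 2 ∧ ∃ τ : ι → ℤ, (MvPolynomial.eval τ a : ZMod p) ≠ 0 := by
  obtain ⟨τ, hτ⟩ : ∃ τ, MvPolynomial.eval τ a ≠ 0 := by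
    by_contra! hzero
    exact ha (MvPolynomial.funext fun τ ↦ by rw [hzero, map_zero])
  obtain ⟨p, hlt, hp⟩ := Nat.exists_infinite_primes ((MvPolynomial.eval τ a).natAbs + 3)
  refine ⟨p, hp, by omega, τ, fun hdvd ↦ ?_⟩
  rw [ZMod.intCast_zmod_eq_zero_iff_dvd, Int.natCast_dvd] at hdvd
  have := Nat.le_of_dvd (Int.natAbs_pos.mpr hτ) hdvd
  omega

lemma exists_hasZeroDichotomy_of_dvd_algebraMap {B : Type*} [CommRing B]
    [Algebra (MvPolynomial ι ℤ) B] [Module.Finite (MvPolynomial ι ℤ) B] {w : B}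
    {a : MvPolynomial ι ℤ} (ha : a ≠ 0) (hw : w ∣ algebraMap (MvPolynomial ι ℤ) B a) :
    ∃ r, 0 < r ∧ ∀ ψ : B →ₗ[MvPolynomial ι ℤ] MvPolynomial ι ℤ,
      HasZeroDichotomy r (fun n ↦ ψ (w ^ n)) := by
  obtain ⟨p, hp, hp2, τ, hτ⟩ := exists_prime_intCast_eval_ne_zero ha
  have : Fact p.Prime := ⟨hp⟩
  let κ := (Int.castRingHom (ZMod p)).comp (MvPolynomial.eval τ)
  have : (RingHom.ker κ).IsMaximal :=
    RingHom.ker_isMaximal_of_surjective κ (ZMod.ringHom_surjective κ)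
  have : Finite (MvPolynomial ι ℤ ⧸ RingHom.ker κ) := .of_injective _ κ.kerLift_injective
  obtain ⟨r, hr, hwr⟩ := exists_pow_sub_one_mem_map_algebraMap (RingHom.ker κ) hτ hw
  exact ⟨r, hr, (isPadicallySeparating_ker_eval p τ).hasZeroDichotomy hp2 hwr⟩

end MvPolynomial

section Field

lemma exists_algebra_mvPolynomial_isAlgebraic (R S : Type*) [CommRing R] [Nontrivial R]
    [CommRing S] [NoZeroDivisors S] [Algebra R S] [FaithfulSMul R S] :
    ∃ (s : Set S) (_ : Algebra (MvPolynomial s R) S),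
      FaithfulSMul (MvPolynomial s R) S ∧ Algebra.IsAlgebraic (MvPolynomial s R) S := by
  obtain ⟨s, hs⟩ := exists_isTranscendenceBasis R S
  let _ : Algebra (MvPolynomial s R) S := (MvPolynomial.aeval ((↑) : s → S)).toAlgebra
  have := hs.isAlgebraic
  refine ⟨s, inferInstance, (faithfulSMul_iff_algebraMap_injective _ _).mpr hs.1, ?_⟩
  refine .of_ringHom_of_comp_eq (S := Algebra.adjoin R (Set.range ((↑) : s → S)))
    hs.1.aevalEquiv (RingHom.id S) hs.1.aevalEquiv.surjective Function.injective_id ?_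
  ext x <;> simp [RingHom.algebraMap_toAlgebra]

variable {K : Type*} [Field K] [CharZero K]

theorem exists_hasZeroDichotomy_of_isUnit {B : Type*} [CommRing B] [Algebra K B]
    [Module.Finite K B] {x : B} (hx : IsUnit x) (φ : B →ₗ[K] K) :
    ∃ r, 0 < r ∧ HasZeroDichotomy r (fun n ↦ φ (x ^ n)) := by
  obtain ⟨s, _, _, _⟩ := exists_algebra_mvPolynomial_isAlgebraic ℤ K
  let A := MvPolynomial s ℤ
  let _ : Algebra A B := Algebra.compHom B (algebraMap A K)
  have : IsScalarTower A K B := .of_algebraMap_eq fun _ ↦ rfl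
  obtain ⟨c, hc, hcx⟩ := ((Algebra.IsAlgebraic.isAlgebraic (R := K) x).restrictScalars
    A).exists_integral_multiple
  have hcK : algebraMap A K c ≠ 0 := (FaithfulSMul.algebraMap_eq_zero_iff A K).not.mpr hc
  let B' := Algebra.adjoin A {c • x}
  have : Module.Finite A B' := .of_fg hcx.fg_adjoin_singleton
  let w : B' := ⟨c • x, Algebra.self_mem_adjoin_singleton A _⟩
  have hw : w ∈ nonZeroDivisors B' := by
    refine mem_nonZeroDivisors_of_injective (f := B'.val) Subtype.val_injective
      (IsUnit.mem_nonZeroDivisors ?_)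
    change IsUnit (c • x)
    rw [← algebraMap_smul K, Algebra.smul_def]
    exact (hcK.isUnit.map (algebraMap K B)).mul hx
  have hw' : IsAlgebraic A w := (Algebra.IsIntegral.isIntegral w).isAlgebraic
  obtain ⟨a, ha, hwa⟩ := hw'.exists_nonzero_dvd hw
  obtain ⟨r, hr, hψ⟩ := exists_hasZeroDichotomy_of_dvd_algebraMap ha hwa
  let _ : Algebra (FractionRing A) K := FractionRing.liftAlgebra A K
  have hdich := HasZeroDichotomy.of_linearMap (FractionRing A) hψ
    (φ.restrictScalars A ∘ₗ B'.val.toLinearMap)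
  have hzero (n : ℕ) : φ ((c • x) ^ n) = 0 ↔ φ (x ^ n) = 0 := by
    rw [← algebraMap_smul K, _root_.smul_pow, map_smul, smul_eq_zero_iff_right (pow_ne_zero n hcK)]
  exact ⟨r, hr, by simpa [HasZeroDichotomy, hzero, w] using hdich⟩

end Field

section Recurrence

variable {R : Type*} [CommRing R]

/-- The linear functional on polynomials with `X ^ n ↦ u n`, through which linear recurrences of `u`
become polynomials in its kernel. -/
noncomputable def sequenceFunctional (u : ℕ → R) : R[X] →ₗ[R] R :=
  lsum fun n ↦ LinearMap.mulRight R (u n)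

lemma sequenceFunctional_monomial (u : ℕ → R) (n : ℕ) (b : R) :
    sequenceFunctional u (monomial n b) = b * u n :=
  sum_monomial_index (n := n) b (fun n ↦ LinearMap.mulRight R (u n)) (map_zero _)

lemma sequenceFunctional_X_pow (u : ℕ → R) (n : ℕ) : sequenceFunctional u (X ^ n) = u n := by
  rw [X_pow_eq_monomial, sequenceFunctional_monomial, one_mul]

lemma sequenceFunctional_charPoly_mul {E : LinearRecurrence R} {u : ℕ → R} (hu : E.IsSolution u)
    (q : R[X]) : sequenceFunctional u (E.charPoly * q) = 0 := by
  induction q using Polynomial.induction_on' with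
  | add q₁ q₂ h₁ h₂ => rw [mul_add, map_add, h₁, h₂, add_zero]
  | monomial n b =>
    rw [LinearRecurrence.charPoly, sub_mul, Finset.sum_mul, map_sub, map_sum, sub_eq_zero]
    simp only [monomial_mul_monomial, sequenceFunctional_monomial, one_mul]
    rw [add_comm E.order, hu n, Finset.mul_sum]
    refine Finset.sum_congr rfl fun i _ ↦ ?_
    rw [add_comm n, mul_right_comm, mul_assoc, mul_comm b, mul_assoc]

lemma isUnit_root_of_isUnit_coeff_zero {Q : R[X]} (h : IsUnit (Q.coeff 0)) :
    IsUnit (AdjoinRoot.root Q) := by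
  have hQ : AdjoinRoot.root Q * AdjoinRoot.mk Q Q.divX = -AdjoinRoot.of Q (Q.coeff 0) := by
    rw [eq_neg_iff_add_eq_zero, ← AdjoinRoot.mk_X, ← AdjoinRoot.mk_C, ← map_mul, ← map_add,
      X_mul_divX_add, AdjoinRoot.mk_self]
  refine isUnit_of_mul_isUnit_left (y := AdjoinRoot.mk Q Q.divX) ?_
  rw [hQ]
  exact (h.map (AdjoinRoot.of Q)).neg

lemma exists_linearMap_root_pow_eq {K : Type*} [Field K] {E : LinearRecurrence K} {u : ℕ → K}
    (hu : E.IsSolution u) :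
    ∃ (Q : K[X]) (t : ℕ), Q.Monic ∧ Q.coeff 0 ≠ 0 ∧
      ∃ φ : AdjoinRoot Q →ₗ[K] K, ∀ n, φ (AdjoinRoot.root Q ^ n) = u (n + t) := by
  have hE := E.charPoly_monic
  obtain ⟨Q, hQ, hX⟩ := E.charPoly.exists_eq_pow_rootMultiplicity_mul_and_not_dvd hE.ne_zero 0
  set t := E.charPoly.rootMultiplicity 0
  rw [C_0, sub_zero] at hQ hX
  have hQm : Q.Monic := (monic_X_pow t).of_mul_monic_left (hQ ▸ hE)
  refine ⟨Q, t, hQm, mt X_dvd_iff.mpr hX, sequenceFunctional u ∘ₗ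
    LinearMap.mulLeft K (X ^ t) ∘ₗ AdjoinRoot.modByMonicHom hQm, fun n ↦ ?_⟩
  calc sequenceFunctional u (X ^ t * AdjoinRoot.modByMonicHom hQm (AdjoinRoot.root Q ^ n))
      = sequenceFunctional u (X ^ t * (X ^ n %ₘ Q)) := by
        rw [← AdjoinRoot.mk_X, ← map_pow, AdjoinRoot.modByMonicHom_mk]
    _ = sequenceFunctional u (X ^ (n + t) - E.charPoly * (X ^ n /ₘ Q)) := by
        rw [modByMonic_eq_sub_mul_div, hQ]
        ring_nf
    _ = u (n + t) := by
        rw [map_sub, sequenceFunctional_X_pow, sequenceFunctional_charPoly_mul hu, sub_zero]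

end Recurrence

lemma HasZeroDichotomy.eventually_eq_zero_iff {M : Type*} [Zero M] {r : ℕ} {u : ℕ → M}
    (hu : HasZeroDichotomy r u) (hr : 0 < r) : ∀ᶠ n in atTop, u (n + r) = 0 ↔ u n = 0 := by
  have hclass (j : ℕ) : ∀ᶠ m in atTop, u (r * (m + 1) + j) = 0 ↔ u (r * m + j) = 0 := by
    by_cases hinf : {n | u (r * n + j) = 0}.Infinite
    · exact .of_forall fun m ↦ iff_of_true (hu j hinf _) (hu j hinf _)
    · have hne : ∀ᶠ m in atTop, u (r * m + j) ≠ 0 := by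
        rw [← Nat.cofinite_eq_atTop]
        exact (Set.not_infinite.mp hinf).eventually_cofinite_notMem
      filter_upwards [hne, (tendsto_add_atTop_nat 1).eventually hne] with m hm hm'
      exact iff_of_false hm' hm
  have hclasses : ∀ᶠ m in atTop, ∀ j ∈ Finset.range r,
      (u (r * (m + 1) + j) = 0 ↔ u (r * m + j) = 0) :=
    (Finset.range r).eventually_all.mpr fun j _ ↦ hclass j
  filter_upwards [(Nat.tendsto_div_const_atTop hr.ne').eventually hclasses] with n hn
  have hnr := hn (n % r) (Finset.mem_range.mpr (n.mod_lt hr))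
  rwa [mul_add_one, add_right_comm, n.div_add_mod] at hnr

theorem skolem_mahler_lech {K : Type*} [Field K] [CharZero K] {E : LinearRecurrence K} {u : ℕ → K}
    (hu : E.IsSolution u) : ∃ T, 0 < T ∧ ∀ᶠ n in atTop, u (n + T) = 0 ↔ u n = 0 := by
  obtain ⟨Q, t, hQ, hQ₀, φ, hφ⟩ := exists_linearMap_root_pow_eq hu
  have := hQ.finite_adjoinRoot
  obtain ⟨T, hT, hdich⟩ :=
    exists_hasZeroDichotomy_of_isUnit (isUnit_root_of_isUnit_coeff_zero hQ₀.isUnit) φ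
  refine ⟨T, hT, ?_⟩
  rw [← map_add_atTop_eq_nat t, eventually_map]
  filter_upwards [hdich.eventually_eq_zero_iff hT] with n hn
  rwa [hφ, hφ, add_right_comm] at hn

end SkolemMahlerLech

theorem zero_indicator_eventually_periodic {K : Type*} [Field K] [CharZero K]
    (d : ℕ) (hd : 1 ≤ d) (γ : Fin d → K) (a : ℕ → K)
    (hrec : ∀ n : ℕ, a (n + d) = ∑ j : Fin d, γ j * a (n + d - 1 - j))
    (c : ℕ → ℕ) (hc : ∀ n, c n = if a n = 0 then 1 else 0) :
    ∃ N T : ℕ, 1 ≤ T ∧ ∀ n, N ≤ n → c (n + T) = c n := by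
  let E : LinearRecurrence K := ⟨d, fun i ↦ γ i.rev⟩
  have hE : E.IsSolution a := by
    intro n
    rw [hrec, ← Equiv.sum_comp Fin.revPerm]
    refine Finset.sum_congr rfl fun i _ ↦ ?_
    rw [Fin.revPerm_apply, Fin.val_rev, show n + d - 1 - (d - (i + 1)) = n + i by omega]
  obtain ⟨T, hT, hperiod⟩ := SkolemMahlerLech.skolem_mahler_lech hE
  obtain ⟨N, hN⟩ := Filter.eventually_atTop.mp hperiod
  refine ⟨N, T, hT, fun n hn ↦ ?_⟩
  rw [hc, hc]
  simp only [hN n hn]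
end
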